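/- Every unhindered web is linkable: if a web Γ = (D, A, B) contains no hindrance, then there exists a linkage of Γ. -/

import Mathlib

/-!
The theorem is the main step of the Aharoni–Berger infinite Menger theorem.

A wave is encoded by the region `R` it cuts off from `B` and the edge relation `F` of its paths
(`Core.Wave`); `Core.Hind Γ Y` says that the web with `Y` deleted is hindered, and `Core.Lk Γ S`
that `A ∩ S` is linked to `B` by disjoint paths inside `S`. The translation to warps is made in
`hindered_of_hind` and `linkable_of_lk`.

*One path.* Let the web with `Y` deleted be unhindered. The alternating path argument `aug` shows
how finite deletions affect waves (`hind_union_finite`, `avoid`, `wave_to`), and with the maximal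
waves of `exists_max_wave` this gives `one_point`: each vertex of `A` outside `Y` lies in a finite
set that is linked within itself and whose deletion keeps the web unhindered. Iterating this
settles countable sets.

*Small closed sets.* For a regular uncountable `κ`, deleting a set `N` of fewer than `κ` vertices
keeps the web unhindered provided `N` is closed under a suitable function with values of size
less than `κ` (`closed_good`). Indeed, a hindrance after deleting `N` is a hindrance of the
original web except for a set of defects, which form a tight subset of `N` (`tight_of_hind`): a
wave outside `N` ends at any one of them and at all other boundary vertices of its region. If `N`
is closed, every defect lies in tight subsets of small sets that are as closed as desired. Hence
each defect can be repaired by rerouting paths through a tight set, at the cost of new defects of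
the same kind (`good_step`), and after `κ` repairs in a suitable order no defect is left
(`hind_of_repair`): the original web was hindered.

*Induction on cardinals.* `LP Γ κ` states that every set of at most `κ` vertices extends to
a linked set of the same size satisfying any prescribed closure requirement. In the regular case
the set is exhausted by a chain of length `κ` of smaller sets closed in the sense of
`closed_good`, each linked outside its predecessors. In the singular case the chain has the length
of the cofinality of `κ` and sizes increasing to `κ`. The closure requirements of later stages may
then have values larger than the current stage; each stage takes care of the initial part of
these values that has its own size, so that unions at limit stages are closed. Taking all vertices
for the set gives the theorem.
-/

namespace ErdosMenger

variable {V : Type*}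

/-- A finite path in a digraph with edge relation `E`: a nonempty list of
distinct vertices, each consecutive pair of which is a directed edge. -/
def IsFinPath (E : V → V → Prop) (p : List V) : Prop :=
  p ≠ [] ∧ p.Nodup ∧ p.Chain' E

/-- An `X`–`Y` path: a finite path starting in `X` and ending in `Y`. -/
def IsXYPath (E : V → V → Prop) (X Y : Set V) (p : List V) : Prop :=
  IsFinPath E p ∧ (∃ x ∈ X, p.head? = some x) ∧ (∃ y ∈ Y, p.getLast? = some y)

/-- `S` is `X`–`Y`-separating: every `X`–`Y` path contains a vertex of `S`. -/
def Separates (E : V → V → Prop) (X Y S : Set V) : Prop :=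
  ∀ p : List V, IsXYPath E X Y p → ∃ s ∈ S, s ∈ p


/-- A path in a digraph: either finite (a list of vertices) or infinite
(a sequence of vertices). -/
inductive GPath (V : Type*) where
  | fin : List V → GPath V
  | inf : (ℕ → V) → GPath V

namespace GPath

variable {V : Type*}

/-- The predicate that a `GPath` really is a path of the digraph with edge
relation `E`: finite paths are nonempty lists of distinct vertices whose
consecutive pairs are edges; infinite paths are injective sequences whose
consecutive pairs are edges. -/
def IsPath (E : V → V → Prop) : GPath V → Prop
  | .fin l => l ≠ [] ∧ l.Nodup ∧ l.Chain' E
  | .inf f => Function.Injective f ∧ ∀ n, E (f n) (f (n + 1))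

/-- The vertex set of a path. -/
def verts : GPath V → Set V
  | .fin l => {v | v ∈ l}
  | .inf f => Set.range f

/-- The initial vertex of a path. -/
def initv : GPath V → Option V
  | .fin l => l.head?
  | .inf f => some (f 0)

/-- The terminal vertex of a (finite) path. -/
def terv : GPath V → Option V
  | .fin l => l.getLast?
  | .inf _ => none

/-- The edge set of a path. -/
def edges : GPath V → Set (V × V)
  | .fin l => {e | e ∈ l.zip l.tail}
  | .inf f => {e | ∃ n, e = (f n, f (n + 1))}

end GPath

variable {V : Type*}

/-- `in[W]`: the set of initial vertices of the paths of `W`. -/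
def warpIn (W : Set (GPath V)) : Set V := {v | ∃ P ∈ W, P.initv = some v}

/-- `ter[W]`: the set of terminal vertices of the finite paths of `W`. -/
def warpTer (W : Set (GPath V)) : Set V := {v | ∃ P ∈ W, P.terv = some v}

/-- `V[W]`: the set of vertices appearing on paths of `W`. -/
def warpVerts (W : Set (GPath V)) : Set V := {v | ∃ P ∈ W, v ∈ P.verts}

/-- `E[W]`: the set of edges appearing on paths of `W`. -/
def warpEdges (W : Set (GPath V)) : Set (V × V) := {e | ∃ P ∈ W, e ∈ P.edges}

/-- A web `Γ = (D, A, B)`: a digraph together with vertex sets `A` and `B`,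
such that no edge enters `A` and no edge leaves `B`. -/
structure Web (V : Type*) where
  Adj : V → V → Prop
  A : Set V
  B : Set V
  not_into_A : ∀ u v, Adj u v → v ∉ A
  not_from_B : ∀ u v, Adj u v → u ∉ B

namespace Web

variable (Γ : Web V)

/-- A warp: a set of pairwise vertex-disjoint paths of the web. -/
def IsWarp (W : Set (GPath V)) : Prop :=
  (∀ P ∈ W, P.IsPath Γ.Adj) ∧
    ∀ P ∈ W, ∀ Q ∈ W, P ≠ Q → ∀ v, v ∈ P.verts → v ∉ Q.verts

/-- A wave: an `A`-starting warp `W` such that `ter[W]` is `A`–`B`-separating. -/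
def IsWave (W : Set (GPath V)) : Prop :=
  Γ.IsWarp W ∧ warpIn W ⊆ Γ.A ∧ Separates Γ.Adj Γ.A Γ.B (warpTer W)

/-- A hindrance: a wave with `in[W] ≠ A`. -/
def IsHindrance (W : Set (GPath V)) : Prop :=
  Γ.IsWave W ∧ warpIn W ≠ Γ.A

/-- A web is hindered if it contains a hindrance. -/
def Hindered : Prop := ∃ W, Γ.IsHindrance W

/-- An `A`–`B`-warp: a set of pairwise disjoint finite `A`–`B` paths, each
meeting `A ∪ B` only at its endpoints. -/
def IsABWarp (𝒲 : Set (List V)) : Prop :=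
  (∀ p ∈ 𝒲, IsXYPath Γ.Adj Γ.A Γ.B p) ∧
    (∀ p ∈ 𝒲, ∀ v ∈ p, v ∈ Γ.A ∪ Γ.B → p.head? = some v ∨ p.getLast? = some v) ∧
    ∀ p ∈ 𝒲, ∀ q ∈ 𝒲, p ≠ q → ∀ v, v ∈ p → v ∉ q

/-- A linkage of `Γ`: an `A`–`B`-warp whose set of initial vertices is all of `A`. -/
def IsLinkage (𝒲 : Set (List V)) : Prop :=
  Γ.IsABWarp 𝒲 ∧ {v | ∃ p ∈ 𝒲, p.head? = some v} = Γ.A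

/-- A web is linkable if it has a linkage. -/
def Linkable : Prop := ∃ 𝒲, Γ.IsLinkage 𝒲

/-- The web `Γ − X` obtained by deleting the vertices of `X`. -/
def delete (X : Set V) : Web V where
  Adj u v := Γ.Adj u v ∧ u ∉ X ∧ v ∉ X
  A := Γ.A \ X
  B := Γ.B \ X
  not_into_A := fun u v h hv => Γ.not_into_A u v h.1 hv.1
  not_from_B := fun u v h hu => Γ.not_from_B u v h.1 hu.1

end Web

namespace Core
open Relation

section Flows
variable {V : Type*} {Γ : Web V}

/-! ### Regions, flows and coverage -/

/-- The out-boundary of a vertex set `R`. -/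
def bd (Γ : Web V) (R : Set V) : Set V := {w | w ∉ R ∧ ∃ r ∈ R, Γ.Adj r w}

/-- `w` is covered by `F` if the `F`-path through `w` can be traced back to a vertex of `A`. -/
def Cov (Γ : Web V) (F : V → V → Prop) (w : V) : Prop := ∃ a ∈ Γ.A, ReflTransGen F a w

/-- A flow on `R`: a set of edges with tails in `R` in which every vertex has at most one
out-edge and at most one in-edge. -/
structure Flow (Γ : Web V) (R : Set V) (F : V → V → Prop) : Prop where
  adj : ∀ {u w}, F u w → Γ.Adj u w
  mem : ∀ {u w}, F u w → u ∈ R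
  fn : ∀ {u w w'}, F u w → F u w' → w = w'
  inj : ∀ {u u' w}, F u w → F u' w → u = u'

/-- A wave of the web with `Y` deleted, encoded by the region `R` it cuts off and by the edges of
its paths: every boundary vertex of `R` outside `Y` is covered. -/
structure Wave (Γ : Web V) (Y R : Set V) (F : V → V → Prop) : Prop extends Flow Γ R F where
  dB : ∀ {v}, v ∈ R → v ∉ Γ.B
  dY : ∀ {v}, v ∈ R → v ∉ Y
  cov : ∀ {w}, w ∈ bd Γ R → w ∉ Y → Cov Γ F w

/-- The web with `Y` deleted is hindered: some wave leaves a vertex of `A` in its region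
without an out-edge. -/
def Hind (Γ : Web V) (Y : Set V) : Prop :=
  ∃ R F a, Wave Γ Y R F ∧ a ∈ Γ.A ∧ a ∈ R ∧ ∀ w, ¬ F a w

/-- The edges of `F` lying on paths that start in `A`. -/
def prune (Γ : Web V) (F : V → V → Prop) : V → V → Prop := fun u w => F u w ∧ Cov Γ F u

theorem notA_of_adj {u w : V} (h : Γ.Adj u w) : w ∉ Γ.A := Γ.not_into_A u w h

theorem Cov.step {F : V → V → Prop} {u w : V} (h : Cov Γ F u) (e : F u w) : Cov Γ F w := by
  obtain ⟨a, ha, h⟩ := h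
  exact ⟨a, ha, h.tail e⟩

theorem Cov.trans {F : V → V → Prop} {u w : V} (h : Cov Γ F u) (e : ReflTransGen F u w) :
    Cov Γ F w := by
  obtain ⟨a, ha, h⟩ := h
  exact ⟨a, ha, ReflTransGen.trans h e⟩

theorem Cov.of_A {F : V → V → Prop} {u : V} (h : u ∈ Γ.A) : Cov Γ F u := ⟨u, h, .refl⟩

theorem rtg_mono {F F' : V → V → Prop} (h : ∀ u w, F u w → F' u w) {u w : V}
    (c : ReflTransGen F u w) : ReflTransGen F' u w := by
  induction c with
  | refl => exact .refl
  | tail _ e ih => exact ih.tail (h _ _ e)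

theorem Cov.mono {F F' : V → V → Prop} (h : ∀ u w, F u w → F' u w) {w : V} (c : Cov Γ F w) :
    Cov Γ F' w := by
  obtain ⟨a, ha, c⟩ := c
  exact ⟨a, ha, rtg_mono h c⟩

theorem Cov.pred {F : V → V → Prop} {w : V} (c : Cov Γ F w) (h : w ∉ Γ.A) :
    ∃ p, F p w ∧ Cov Γ F p := by
  obtain ⟨a, ha, c⟩ := c
  rcases c.cases_tail with rfl | ⟨p, hp, e⟩
  · exact absurd ha h
  · exact ⟨p, e, a, ha, hp⟩

/-- Transfer of a path along a predecessor-closed set `S`. -/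
theorem rtg_back {F F' : V → V → Prop} {S : V → Prop}
    (h : ∀ p q, F p q → S q → F' p q ∧ S p) {u w : V} (c : ReflTransGen F u w) (hw : S w) :
    ReflTransGen F' u w ∧ S u := by
  induction c with
  | refl => exact ⟨.refl, hw⟩
  | tail _ e ih =>
    obtain ⟨e', hs⟩ := h _ _ e hw
    exact ⟨(ih hs).1.tail e', (ih hs).2⟩

theorem Cov.back {F F' : V → V → Prop} {S : V → Prop}
    (h : ∀ p q, F p q → S q → F' p q ∧ S p) {w : V} (c : Cov Γ F w) (hw : S w) :
    Cov Γ F' w := by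
  obtain ⟨a, ha, c⟩ := c
  exact ⟨a, ha, (rtg_back h c hw).1⟩

theorem Cov.prune {F : V → V → Prop} {w : V} (c : Cov Γ F w) : Cov Γ (prune Γ F) w := by
  obtain ⟨a, ha, c⟩ := c
  refine ⟨a, ha, ?_⟩
  induction c with
  | refl => exact .refl
  | tail h e ih => exact ih.tail ⟨e, a, ha, h⟩

theorem Flow.mono {R R' : Set V} {F F' : V → V → Prop} (h : Flow Γ R F)
    (hF : ∀ u w, F' u w → F u w) (hR : ∀ u w, F' u w → u ∈ R') : Flow Γ R' F' where
  adj e := h.adj (hF _ _ e)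
  mem e := hR _ _ e
  fn e e' := h.fn (hF _ _ e) (hF _ _ e')
  inj e e' := h.inj (hF _ _ e) (hF _ _ e')

theorem Flow.prune {R : Set V} {F : V → V → Prop} (h : Flow Γ R F) :
    Flow Γ R (prune Γ F) := h.mono (fun _ _ e => e.1) (fun _ _ e => h.mem e.1)

/-- A path ending at `z` can be followed up to its first visit of `z`. -/
theorem rtg_first {G : V → V → Prop} {u z : V} (c : ReflTransGen G u z) :
    ReflTransGen (fun p q => G p q ∧ p ≠ z) u z := by
  induction c using ReflTransGen.head_induction_on with
  | refl => exact .refl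
  | @head p q e _ ih =>
    by_cases h : p = z
    · subst h; exact .refl
    · exact .head ⟨e, h⟩ ih

/-- A path either never leaves `z`, or it can be followed from its last exit from `z`. -/
theorem rtg_last {G : V → V → Prop} (z : V) {u w : V} (c : ReflTransGen G u w) :
    ReflTransGen (fun p q => G p q ∧ p ≠ z) u w ∨
      ∃ x, G z x ∧ ReflTransGen (fun p q => G p q ∧ p ≠ z) x w := by
  induction c with
  | refl => exact .inl .refl
  | @tail p q _ e ih =>
    by_cases h : p = z
    · subst h; exact .inr ⟨q, e, .refl⟩
    · rcases ih with ih | ⟨x, hx, ih⟩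
      · exact .inl (ih.tail ⟨e, h⟩)
      · exact .inr ⟨x, hx, ih.tail ⟨e, h⟩⟩

theorem rtg_eq_of_no_out {G : V → V → Prop} {u w : V} (h : ∀ x, ¬ G u x)
    (c : ReflTransGen G u w) : u = w := by
  rcases c.cases_head with h' | ⟨x, hx, _⟩
  · exact h'
  · exact absurd hx (h x)

/-- In a functional relation no cycle leads to a vertex without out-edges. -/
theorem no_cycle {G : V → V → Prop} (fn : ∀ u w w', G u w → G u w' → w = w') {m u : V}
    (hu : ∀ x, ¬ G u x) (c : ReflTransGen G m u) : ∀ r, G m r → ReflTransGen G r m → False := by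
  induction c using ReflTransGen.head_induction_on with
  | refl => intro r h _; exact hu r h
  | @head p q e _ ih =>
    intro r h c
    obtain rfl := fn _ _ _ e h
    rcases c.cases_head with rfl | ⟨s, hs, hc⟩
    · exact ih _ e .refl
    · exact ih s hs (hc.tail e)

/-! ### Alternating augmentation -/

/-- Add the edge `(u, x)`, removing any other edge into `x`. -/
def swapE (G : V → V → Prop) (u x : V) : V → V → Prop :=
  fun p q => (G p q ∧ q ≠ x) ∨ (p = u ∧ q = x)

/-- Configurations `(G, u)` reachable from `(F, a)` by alternating moves of a hole: `G` is a flow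
in which one path ends prematurely at the vertex `u`. -/
inductive Cfg (Γ : Web V) (R : Set V) (F : V → V → Prop) (a : V) : (V → V → Prop) → V → Prop
  | base : Cfg Γ R F a F a
  | swap {G u x z} : Cfg Γ R F a G u → Γ.Adj u x → G z x →
      Cfg Γ R F a (prune Γ (swapE G u x)) z
  | ext {G u x} : Cfg Γ R F a G u → Γ.Adj u x → x ∈ R → (∀ z, ¬ G z x) →
      Cfg Γ R F a (prune Γ (swapE G u x)) x
  | retr {G u p} : Cfg Γ R F a G u → G p u → Cfg Γ R F a (fun r s => G r s ∧ s ≠ u) p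

/-- The set of possible positions of the hole. -/
def hole (Γ : Web V) (R : Set V) (F : V → V → Prop) (a : V) : Set V := {u | ∃ G, Cfg Γ R F a G u}

theorem upstream {R : Set V} {F : V → V → Prop} {a : V} {G : V → V → Prop} {u p : V}
    (c : Cfg Γ R F a G u) (fn : ∀ u w w', G u w → G u w' → w = w') (hu : ∀ x, ¬ G u x)
    (h : ReflTransGen G p u) : p ∈ hole Γ R F a := by
  suffices H : ∃ G1, Cfg Γ R F a G1 p ∧ ∀ q r, G q r → ReflTransGen G r p → G1 q r by
    obtain ⟨G1, h1, _⟩ := H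
    exact ⟨G1, h1⟩
  induction h using ReflTransGen.head_induction_on with
  | refl => exact ⟨G, c, fun q r h _ => h⟩
  | @head p m e hm ih =>
    obtain ⟨G1, h1, h2⟩ := ih
    refine ⟨_, .retr h1 (h2 _ _ e .refl), fun q r hqr hr => ⟨h2 _ _ hqr (hr.tail e), ?_⟩⟩
    rintro rfl
    rcases hr.cases_head with rfl | ⟨s, hs, hc⟩
    · exact no_cycle fn hu hm _ e .refl
    · exact no_cycle fn hu hm _ hs (hc.tail e)

theorem swap_cov {G : V → V → Prop} {u x z : V} {R : Set V} (f : Flow Γ R G)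
    (hu : ∀ w, ¬ G u w) (cu : Cov Γ G u) (hz : G z x) {p : V} (cp : Cov Γ G p) :
    Cov Γ (swapE G u x) p ∨ ReflTransGen G p u := by
  have key : ∀ p q, (G p q ∧ p ≠ z) → swapE G u x p q := by
    rintro p q ⟨h, hp⟩
    exact .inl ⟨h, fun hq => hp (f.inj (hq ▸ h) hz)⟩
  obtain ⟨a1, ha1, c1⟩ := cp
  rcases rtg_last z c1 with c1 | ⟨x', hx', c1⟩
  · exact .inl ⟨a1, ha1, rtg_mono key c1⟩
  · obtain rfl := f.fn hz hx'
    obtain ⟨a2, ha2, c2⟩ := cu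
    rcases rtg_last z c2 with c2 | ⟨x', hx', c2⟩
    · exact .inl ⟨a2, ha2, ((rtg_mono key c2).tail (.inr ⟨rfl, rfl⟩)).trans (rtg_mono key c1)⟩
    · obtain rfl := f.fn hz hx'
      right
      have := ReflTransGen.total_of_right_unique (r := fun p q => G p q ∧ p ≠ z)
        (fun _ _ _ h h' => f.fn h.1 h'.1) c1 c2
      rcases this with h | h
      · exact rtg_mono (fun _ _ h => h.1) h
      · rw [rtg_eq_of_no_out (fun x h => hu x h.1) h]

/-- The invariants of an alternating configuration. -/
structure CfgInv (Γ : Web V) (R : Set V) (F : V → V → Prop) (a : V) (G : V → V → Prop) (u : V) :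
    Prop where
  flow : Flow Γ R G
  tails : ∀ {p q}, G p q → Cov Γ G p
  mem : u ∈ R
  cov : Cov Γ G u
  out : ∀ w, ¬ G u w
  lost : ∀ {p q}, F p q → ¬ G p q → p ∈ hole Γ R F a
  gained : ∀ {p q}, G p q → ¬ F p q → p ∈ hole Γ R F a
  heads : ∀ {z w}, G z w → w ∈ hole Γ R F a ∨ ∃ z', F z' w
  keep : ∀ {w}, w ∉ hole Γ R F a → Cov Γ F w → Cov Γ G w
  expo : ∀ {a'}, a' ∈ Γ.A → a' ≠ a → (∀ w, ¬ F a' w) → (∀ w, ¬ G a' w) ∧ u ≠ a'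

theorem cfg_inv {R : Set V} {F : V → V → Prop} {a : V} (f : Flow Γ R F)
    (tails : ∀ {p q}, F p q → Cov Γ F p) (haA : a ∈ Γ.A) (haR : a ∈ R) (hao : ∀ w, ¬ F a w)
    {G : V → V → Prop} {u : V} (c : Cfg Γ R F a G u) : CfgInv Γ R F a G u := by
  induction c with
  | base =>
    exact ⟨f, tails, haR, .of_A haA, hao, fun h h' => absurd h h', fun h h' => absurd h h',
      fun h => .inr ⟨_, h⟩, fun _ h => h, fun _ h1 h2 => ⟨h2, h1.symm⟩⟩
  | @swap G u x z c hux hzx ih =>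
    have hf : Flow Γ R (swapE G u x) := by
      refine ⟨?_, ?_, ?_, ?_⟩
      · rintro p q (⟨h, _⟩ | ⟨rfl, rfl⟩)
        exacts [ih.flow.adj h, hux]
      · rintro p q (⟨h, _⟩ | ⟨rfl, rfl⟩)
        exacts [ih.flow.mem h, ih.mem]
      · rintro p q q' (⟨h, _⟩ | ⟨rfl, rfl⟩) (⟨h', _⟩ | ⟨h', rfl⟩)
        exacts [ih.flow.fn h h', absurd (h' ▸ h) (ih.out _), absurd h' (ih.out _), rfl]
      · rintro p p' q (⟨h, h1⟩ | ⟨rfl, rfl⟩) (⟨h', h2⟩ | ⟨h', h3⟩)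
        exacts [ih.flow.inj h h', absurd h3 h1, absurd rfl h2, h'.symm]
    have hzu : z ≠ u := fun h => ih.out _ (h ▸ hzx)
    have cz : Cov Γ (swapE G u x) z := by
      obtain ⟨a1, ha1, c1⟩ := ih.tails hzx
      refine ⟨a1, ha1, rtg_mono ?_ (rtg_first c1)⟩
      rintro p q ⟨h, hp⟩
      exact .inl ⟨h, fun hq => hp (ih.flow.inj (hq ▸ h) hzx)⟩
    have hzZ : z ∈ hole Γ R F a := ⟨_, .swap c hux hzx⟩
    refine ⟨hf.prune, fun h => h.2.prune, ih.flow.mem hzx, cz.prune, ?_, ?_, ?_, ?_, ?_, ?_⟩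
    · rintro w ⟨⟨h, hw⟩ | ⟨h, _⟩, _⟩
      · exact hw (ih.flow.fn h hzx)
      · exact hzu h
    · intro p q hF hH
      by_cases hG : G p q
      · by_cases hq : q = x
        · subst hq
          rw [ih.flow.inj hG hzx]; exact hzZ
        · rcases swap_cov ih.flow ih.out ih.cov hzx (ih.tails hG) with h | h
          · exact absurd ⟨.inl ⟨hG, hq⟩, h⟩ hH
          · exact upstream c (fun _ _ _ => ih.flow.fn) ih.out h
      · exact ih.lost hF hG
    · rintro p q ⟨⟨h, hw⟩ | ⟨rfl, rfl⟩, _⟩ hF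
      · exact ih.gained h hF
      · exact ⟨_, c⟩
    · rintro p q ⟨⟨h, hw⟩ | ⟨rfl, rfl⟩, _⟩
      · exact ih.heads h
      · exact ih.heads hzx
    · intro w hw hc
      rcases swap_cov ih.flow ih.out ih.cov hzx (ih.keep hw hc) with h | h
      · exact h.prune
      · exact absurd (upstream c (fun _ _ _ => ih.flow.fn) ih.out h) hw
    · intro a' h1 h2 h3
      obtain ⟨h4, h5⟩ := ih.expo h1 h2 h3
      refine ⟨?_, fun h => h4 _ (h ▸ hzx)⟩
      rintro w ⟨⟨h, hw⟩ | ⟨rfl, rfl⟩, _⟩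
      · exact h4 _ h
      · exact h5 rfl
  | @ext G u x c hux hxR hx ih =>
    have hsub : ∀ p q, G p q → swapE G u x p q := by
      intro p q h
      exact .inl ⟨h, fun hq => hx p (hq ▸ h)⟩
    have hf : Flow Γ R (swapE G u x) := by
      refine ⟨?_, ?_, ?_, ?_⟩
      · rintro p q (⟨h, _⟩ | ⟨rfl, rfl⟩)
        exacts [ih.flow.adj h, hux]
      · rintro p q (⟨h, _⟩ | ⟨rfl, rfl⟩)
        exacts [ih.flow.mem h, ih.mem]
      · rintro p q q' (⟨h, _⟩ | ⟨rfl, rfl⟩) (⟨h', _⟩ | ⟨h', rfl⟩)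
        exacts [ih.flow.fn h h', absurd (h' ▸ h) (ih.out _), absurd h' (ih.out _), rfl]
      · rintro p p' q (⟨h, h1⟩ | ⟨rfl, rfl⟩) (⟨h', h2⟩ | ⟨h', h3⟩)
        exacts [ih.flow.inj h h', absurd h3 h1, absurd rfl h2, h'.symm]
    have hxA := notA_of_adj hux
    have hncov : ¬ Cov Γ G x := fun h => by
      obtain ⟨p, hp, _⟩ := h.pred hxA
      exact hx p hp
    have hxZ : x ∈ hole Γ R F a := ⟨_, .ext c hux hxR hx⟩
    refine ⟨hf.prune, fun h => h.2.prune, hxR, ?_, ?_, ?_, ?_, ?_, ?_, ?_⟩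
    · exact ((ih.cov.mono hsub).step (.inr ⟨rfl, rfl⟩)).prune
    · rintro w ⟨⟨h, hw⟩ | ⟨h, _⟩, _⟩
      · exact hncov (ih.tails h)
      · subst h; exact hncov ih.cov
    · intro p q hF hH
      by_cases hG : G p q
      · exact absurd ⟨hsub _ _ hG, (ih.tails hG).mono hsub⟩ hH
      · exact ih.lost hF hG
    · rintro p q ⟨⟨h, hw⟩ | ⟨rfl, rfl⟩, _⟩ hF
      · exact ih.gained h hF
      · exact ⟨_, c⟩
    · rintro p q ⟨⟨h, hw⟩ | ⟨rfl, rfl⟩, _⟩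
      · exact ih.heads h
      · exact .inl hxZ
    · intro w hw hc
      exact ((ih.keep hw hc).mono hsub).prune
    · intro a' h1 h2 h3
      obtain ⟨h4, h5⟩ := ih.expo h1 h2 h3
      refine ⟨?_, fun h => hxA (h ▸ h1)⟩
      rintro w ⟨⟨h, hw⟩ | ⟨rfl, rfl⟩, _⟩
      · exact h4 _ h
      · exact h5 rfl
  | @retr G u p c hpu ih =>
    have hback : ∀ r s, G r s → s ≠ u → (G r s ∧ s ≠ u) ∧ r ≠ u := by
      intro r s h hs
      exact ⟨⟨h, hs⟩, fun hr => ih.out _ (hr ▸ h)⟩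
    have hpu' : p ≠ u := fun h => ih.out _ (h ▸ hpu)
    refine ⟨ih.flow.mono (fun _ _ h => h.1) (fun _ _ h => ih.flow.mem h.1), ?_, ih.flow.mem hpu,
      ?_, ?_, ?_, ?_, ?_, ?_, ?_⟩
    · rintro r s ⟨h, hs⟩
      exact (ih.tails h).back (S := (· ≠ u)) hback (fun hr => ih.out _ (hr ▸ h))
    · exact (ih.tails hpu).back (S := (· ≠ u)) hback hpu'
    · rintro w ⟨h, hw⟩
      exact hw (ih.flow.fn h hpu)
    · intro r s hF hH
      by_cases hG : G r s
      · have hs : s = u := by by_contra hs; exact hH ⟨hG, hs⟩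
        subst hs
        rw [ih.flow.inj hG hpu]
        exact ⟨_, .retr c hpu⟩
      · exact ih.lost hF hG
    · rintro r s ⟨h, _⟩ hF
      exact ih.gained h hF
    · rintro r s ⟨h, _⟩
      exact ih.heads h
    · intro w hw hc
      refine (ih.keep hw hc).back (S := (· ≠ u)) hback ?_
      rintro rfl
      exact hw ⟨_, c⟩
    · intro a' h1 h2 h3
      obtain ⟨h4, h5⟩ := ih.expo h1 h2 h3
      exact ⟨fun w h => h4 w h.1, fun h => h4 _ (h ▸ hpu)⟩

/-- The augmentation lemma: the region `Z` swept by the hole started at an exposed `a`.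
Its boundary vertices not entered by `F` are outside `R`, and each of them can be covered by
rerouting `F` inside `Z`. -/
theorem aug {R : Set V} {F : V → V → Prop} {a : V} (f : Flow Γ R F)
    (tails : ∀ {p q}, F p q → Cov Γ F p) (haA : a ∈ Γ.A) (haR : a ∈ R) (hao : ∀ w, ¬ F a w) :
    ∃ Z : Set V, Z ⊆ R ∧ a ∈ Z ∧ (∀ p x, (x ∈ Z ∨ x ∈ bd Γ Z) → F p x → p ∈ Z) ∧
      ∀ x ∈ bd Γ Z, (∀ p, ¬ F p x) → x ∉ R ∧ ∃ H, Flow Γ R H ∧ Cov Γ H x ∧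
        (∀ w, w ∉ Z → Cov Γ F w → Cov Γ H w) ∧
        (∀ a', a' ∈ Γ.A → a' ≠ a → (∀ w, ¬ F a' w) → ∀ w, ¬ H a' w) ∧
        (∀ p q, H p q → q = x ∨ q ∈ R ∨ ∃ p', F p' q) ∧
        (∀ p q, (q ∈ Z ∨ q ∈ bd Γ Z) → H p q → p ∈ Z) := by
  have inv := fun {G u} => @cfg_inv V Γ R F a f tails haA haR hao G u
  have hZR : hole Γ R F a ⊆ R := fun u ⟨G, h⟩ => (inv h).mem
  have hU : ∀ p x, (x ∈ hole Γ R F a ∨ x ∈ bd Γ (hole Γ R F a)) → F p x →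
      p ∈ hole Γ R F a := by
    rintro p x (⟨G, h⟩ | ⟨_, r, ⟨G, h⟩, e⟩) hF
    · by_cases hG : G p x
      · exact ⟨_, .retr h hG⟩
      · exact (inv h).lost hF hG
    · by_cases hG : G p x
      · exact ⟨_, .swap h e hG⟩
      · exact (inv h).lost hF hG
  refine ⟨hole Γ R F a, hZR, ⟨_, .base⟩, hU, ?_⟩
  rintro x ⟨hxZ, r, ⟨G, h⟩, e⟩ hx
  have ih := inv h
  have hGx : ∀ z, ¬ G z x := by
    intro z hz
    rcases ih.heads hz with h' | ⟨z', h'⟩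
    · exact hxZ h'
    · exact hx _ h'
  have hxR : x ∉ R := fun hxR => hxZ ⟨_, .ext h e hxR hGx⟩
  have hsub : ∀ p q, G p q → swapE G r x p q := by
    intro p q h
    exact .inl ⟨h, fun hq => hGx p (hq ▸ h)⟩
  refine ⟨hxR, swapE G r x, ⟨?_, ?_, ?_, ?_⟩, ?_, ?_, ?_, ?_, ?_⟩
  · rintro p q (⟨h, _⟩ | ⟨rfl, rfl⟩)
    exacts [ih.flow.adj h, e]
  · rintro p q (⟨h, _⟩ | ⟨rfl, rfl⟩)
    exacts [ih.flow.mem h, ih.mem]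
  · rintro p q q' (⟨h, _⟩ | ⟨rfl, rfl⟩) (⟨h', _⟩ | ⟨h', rfl⟩)
    exacts [ih.flow.fn h h', absurd (h' ▸ h) (ih.out _), absurd h' (ih.out _), rfl]
  · rintro p p' q (⟨h, h1⟩ | ⟨rfl, rfl⟩) (⟨h', h2⟩ | ⟨h', h3⟩)
    exacts [ih.flow.inj h h', absurd h3 h1, absurd rfl h2, h'.symm]
  · exact (ih.cov.mono hsub).step (.inr ⟨rfl, rfl⟩)
  · intro w hw hc
    exact (ih.keep hw hc).mono hsub
  · intro a' h1 h2 h3 w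
    obtain ⟨h4, h5⟩ := ih.expo h1 h2 h3
    rintro (⟨h, hw⟩ | ⟨rfl, rfl⟩)
    · exact h4 _ h
    · exact h5 rfl
  · rintro p q (⟨h, _⟩ | ⟨rfl, rfl⟩)
    · rcases ih.heads h with h' | h'
      · exact .inr (.inl (hZR h'))
      · exact .inr (.inr h')
    · exact .inl rfl
  · rintro p q hq (⟨hG, _⟩ | ⟨rfl, rfl⟩)
    · by_cases hF : F p q
      · exact hU p q hq hF
      · exact ih.gained hG hF
    · exact ⟨_, h⟩

end Flows

section Waves
variable {V : Type*} {Γ : Web V}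

/-! ### Joining waves and maximal waves -/

/-- Follow `F` inside `R`, and `F'` beyond the boundary of `R`. -/
def joinF (Γ : Web V) (F : V → V → Prop) (R : Set V) (F' : V → V → Prop) : V → V → Prop :=
  fun u w => F u w ∨ (F' u w ∧ u ∉ R ∧ w ∉ R ∧ w ∉ bd Γ R)

theorem mem_or_bd {R : Set V} {u w : V} (hu : u ∈ R) (h : Γ.Adj u w) : w ∈ R ∨ w ∈ bd Γ R := by
  by_cases hw : w ∈ R
  · exact .inl hw
  · exact .inr ⟨hw, u, hu, h⟩

theorem bd_notA {R : Set V} {w : V} (h : w ∈ bd Γ R) : w ∉ Γ.A := by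
  obtain ⟨_, r, _, e⟩ := h
  exact notA_of_adj e

theorem bd_union {R R' : Set V} {w : V} (h : w ∈ bd Γ (R ∪ R')) : w ∈ bd Γ R ∨ w ∈ bd Γ R' := by
  obtain ⟨h1, r, hr | hr, e⟩ := h
  · exact .inl ⟨fun h => h1 (.inl h), r, hr, e⟩
  · exact .inr ⟨fun h => h1 (.inr h), r, hr, e⟩

theorem join_flow {R R' : Set V} {F F' : V → V → Prop} (f : Flow Γ R F) (f' : Flow Γ R' F') :
    Flow Γ (R ∪ R') (joinF Γ F R F') := by
  refine ⟨?_, ?_, ?_, ?_⟩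
  · rintro u w (h | ⟨h, _⟩)
    exacts [f.adj h, f'.adj h]
  · rintro u w (h | ⟨h, _⟩)
    exacts [.inl (f.mem h), .inr (f'.mem h)]
  · rintro u w w' (h | ⟨h, h1, _⟩) (h' | ⟨h', h1', _⟩)
    exacts [f.fn h h', absurd (f.mem h) h1', absurd (f.mem h') h1, f'.fn h h']
  · rintro u u' w (h | ⟨h, _, h1, h2⟩) (h' | ⟨h', _, h1', h2'⟩)
    · exact f.inj h h'
    · exact ((mem_or_bd (f.mem h) (f.adj h)).elim h1' h2').elim
    · exact ((mem_or_bd (f.mem h') (f.adj h')).elim h1 h2).elim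
    · exact f'.inj h h'

theorem join_cov {R R' Y : Set V} {F F' : V → V → Prop} (f' : Flow Γ R' F')
    (h1 : ∀ w ∈ bd Γ R, w ∉ Y → Cov Γ F w) (h2 : ∀ u w, F' u w → u ∈ bd Γ R → u ∉ Y) {x : V}
    (c : Cov Γ F' x) (hx : x ∉ R) (hx' : x ∈ bd Γ R → x ∉ Y) : Cov Γ (joinF Γ F R F') x := by
  obtain ⟨a, ha, c⟩ := c
  induction c with
  | refl => exact .of_A ha
  | @tail p x _ e ih =>
    by_cases hb : x ∈ bd Γ R
    · exact (h1 x hb (hx' hb)).mono fun _ _ h => .inl h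
    · have hp : p ∉ R := fun hp => (mem_or_bd hp (f'.adj e)).elim hx hb
      exact (ih hp (h2 _ _ e)).step (.inr ⟨e, hp, hx, hb⟩)

theorem join_wave {R R' Y1 Y2 Y3 : Set V} {F F' : V → V → Prop} (w1 : Wave Γ Y1 R F)
    (w2 : Wave Γ Y2 R' F') (h2 : ∀ u w, F' u w → u ∈ bd Γ R → u ∉ Y1)
    (hd : ∀ v, v ∈ R ∨ v ∈ R' → v ∉ Y3)
    (h3 : ∀ w, w ∉ Y3 → w ∈ bd Γ (R ∪ R') →
      (w ∈ bd Γ R → w ∉ Y1) ∧ (w ∈ bd Γ R' → w ∉ bd Γ R → w ∉ Y2)) :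
    Wave Γ Y3 (R ∪ R') (joinF Γ F R F') := by
  refine ⟨join_flow w1.toFlow w2.toFlow, ?_, fun h => hd _ h, ?_⟩
  · rintro v (h | h)
    exacts [w1.dB h, w2.dB h]
  · intro w hw hY
    obtain ⟨h4, h5⟩ := h3 w hY hw
    by_cases hb : w ∈ bd Γ R
    · exact (w1.cov hb (h4 hb)).mono fun _ _ h => .inl h
    · have hb' := (bd_union hw).resolve_left hb
      exact join_cov w2.toFlow (fun _ h h' => w1.cov h h') h2 (w2.cov hb' (h5 hb' hb))
        (fun h => hw.1 (.inl h)) h4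

/-- The union of all wave regions of the web with `Y` deleted. -/
def Rmax (Γ : Web V) (Y : Set V) : Set V := {v | ∃ R F, Wave Γ Y R F ∧ v ∈ R}

theorem Wave.sub_Rmax {Y R : Set V} {F : V → V → Prop} (h : Wave Γ Y R F) : R ⊆ Rmax Γ Y :=
  fun _ hv => ⟨R, F, h, hv⟩

theorem wave_empty (Y : Set V) : Wave Γ Y ∅ (fun _ _ => False) := by
  refine ⟨⟨?_, ?_, ?_, ?_⟩, ?_, ?_, ?_⟩
  all_goals first | exact fun h => h.elim | skip
  rintro w ⟨_, r, hr, _⟩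
  exact hr.elim

theorem wave_sUnion {Y : Set V} {c : Set (Set V × (V → V → Prop))}
    (hc : ∀ p ∈ c, Wave Γ Y p.1 p.2) (hch : IsChain (· ≤ ·) c) :
    Wave Γ Y {v | ∃ p ∈ c, v ∈ p.1} (fun u w => ∃ p ∈ c, p.2 u w) := by
  refine ⟨⟨?_, ?_, ?_, ?_⟩, ?_, ?_, ?_⟩
  · rintro u w ⟨p, hp, h⟩; exact (hc p hp).adj h
  · rintro u w ⟨p, hp, h⟩; exact ⟨p, hp, (hc p hp).mem h⟩
  · rintro u w w' ⟨p, hp, h⟩ ⟨q, hq, h'⟩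
    rcases hch.total hp hq with hpq | hpq
    · exact (hc q hq).fn (hpq.2 _ _ h) h'
    · exact (hc p hp).fn h (hpq.2 _ _ h')
  · rintro u w w' ⟨p, hp, h⟩ ⟨q, hq, h'⟩
    rcases hch.total hp hq with hpq | hpq
    · exact (hc q hq).inj (hpq.2 _ _ h) h'
    · exact (hc p hp).inj h (hpq.2 _ _ h')
  · rintro v ⟨p, hp, h⟩; exact (hc p hp).dB h
  · rintro v ⟨p, hp, h⟩; exact (hc p hp).dY h
  · rintro w ⟨h1, r, ⟨p, hp, h⟩, e⟩ hw
    exact ((hc p hp).cov ⟨fun h2 => h1 ⟨p, hp, h2⟩, r, h, e⟩ hw).mono fun _ _ h => ⟨p, hp, h⟩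

theorem exists_max_wave (Γ : Web V) (Y : Set V) : ∃ F, Wave Γ Y (Rmax Γ Y) F := by
  obtain ⟨⟨R, F⟩, _, hm⟩ := zorn_le_nonempty₀ {p : Set V × (V → V → Prop) | Wave Γ Y p.1 p.2}
    (fun c hc hch y hy => ⟨({v | ∃ p ∈ c, v ∈ p.1}, fun u w => ∃ p ∈ c, p.2 u w),
      wave_sUnion hc hch, fun z hz =>
      ⟨fun v hv => ⟨z, hz, hv⟩, fun u w h => ⟨z, hz, h⟩⟩⟩) (∅, fun _ _ => False) (wave_empty Y)
  have hw : Wave Γ Y R F := hm.1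
  refine ⟨F, ?_⟩
  convert hw
  apply Set.Subset.antisymm _ hw.sub_Rmax
  rintro v ⟨R', F', hw', hv⟩
  have hj := join_wave (Y3 := Y) hw hw' (fun u w h _ => hw'.dY (hw'.mem h))
    (by rintro v (h | h); exacts [hw.dY h, hw'.dY h]) (fun w h _ => ⟨fun _ => h, fun _ _ => h⟩)
  have := hm.2 (y := (R ∪ R', joinF Γ F R F')) hj
    ⟨Set.subset_union_left, fun u w h => Or.inl h⟩
  exact this.1 (.inr hv)

theorem Wave.mono_Y {Y Y' R : Set V} {F : V → V → Prop} (h : Wave Γ Y R F) (hY : Y ⊆ Y')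
    (hd : ∀ v ∈ R, v ∉ Y') : Wave Γ Y' R F :=
  ⟨h.toFlow, h.dB, fun h => hd _ h, fun h1 h2 => h.cov h1 fun h3 => h2 (hY h3)⟩

theorem Wave.prune {Y R : Set V} {F : V → V → Prop} (h : Wave Γ Y R F) :
    Wave Γ Y R (prune Γ F) :=
  ⟨h.toFlow.prune, h.dB, h.dY, fun h1 h2 => (h.cov h1 h2).prune⟩

theorem hind_of_union_A {Y A' : Set V} (hA : A' ⊆ Γ.A) (h : Hind Γ (Y ∪ A')) : Hind Γ Y := by
  obtain ⟨R, F, a, hw, h1, h2, h3⟩ := h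
  refine ⟨R, F, a, ⟨hw.toFlow, hw.dB, fun h h' => hw.dY h (.inl h'), fun hb hY => ?_⟩, h1, h2, h3⟩
  exact hw.cov hb (by rintro (h | h); exacts [hY h, bd_notA hb (hA h)])

/-! ### Deleting a single vertex -/

/-- Restriction of `F` to tails in `Z` still covers the boundary vertices of `Z` entered by `F`,
if `Z` is closed under `F`-predecessors. -/
theorem cov_restrict {Z : Set V} {F : V → V → Prop}
    (hU : ∀ p x, (x ∈ Z ∨ x ∈ bd Γ Z) → F p x → p ∈ Z) {w : V} (hw : w ∈ bd Γ Z)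
    (c : Cov Γ F w) : Cov Γ (fun u x => F u x ∧ u ∈ Z) w := by
  refine c.back (S := fun x => x ∈ Z ∨ x ∈ bd Γ Z) ?_ (.inr hw)
  intro p q h hq
  exact ⟨⟨h, hU p q hq h⟩, .inl (hU p q hq h)⟩

theorem rv_aux {R0 : Set V} {F : V → V → Prop} {t : V} (f : Flow Γ (insert t R0) F)
    (tails : ∀ {p q}, F p q → Cov Γ F p) (htA : t ∉ Γ.A) :
    (∃ Z ⊆ R0, ∃ FZ a, Flow Γ Z FZ ∧ a ∈ Γ.A ∧ a ∈ Z ∧ (∀ w, ¬ FZ a w) ∧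
      ∀ w ∈ bd Γ Z, Cov Γ FZ w ∨ w = t ∨ (w ∉ R0 ∧ ¬ Cov Γ F w)) ∨
    ∃ F', Flow Γ R0 F' ∧ (∀ w, w ∉ R0 → w ≠ t → Cov Γ F w → Cov Γ F' w) ∧
      ∀ a ∈ Γ.A, (∀ w, ¬ F a w) → ∀ w, ¬ F' a w := by
  by_cases ct : Cov Γ F t
  swap
  · refine .inr ⟨F, f.mono (fun _ _ h => h) ?_, fun _ _ _ h => h, fun _ _ h => h⟩
    intro u w h
    refine (f.mem h).resolve_left ?_
    rintro rfl
    exact ct (tails h)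
  obtain ⟨a2, ha2, c2⟩ := ct
  have ha2t : a2 ≠ t := fun h => htA (h ▸ ha2)
  obtain ⟨y2, e2⟩ : ∃ y, F a2 y := by
    rcases c2.cases_head with h | ⟨y, h, _⟩
    exacts [absurd h ha2t, ⟨y, h⟩]
  set F0 := prune Γ (fun u w => F u w ∧ ¬ ReflTransGen F u t) with hF0
  have hF0F : ∀ u w, F0 u w → F u w := fun u w h => h.1.1
  have f0 : Flow Γ R0 F0 := by
    refine f.mono hF0F fun u w h => (f.mem h.1.1).resolve_left ?_
    rintro rfl
    exact h.1.2 .refl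
  have noout : ∀ w, w ∉ R0 → w ≠ t → ∀ x, ¬ F w x := by
    intro w h1 h2 x h
    exact (f.mem h).elim h2 h1
  have hcov : ∀ w, w ∉ R0 → w ≠ t → Cov Γ F w → Cov Γ F0 w ∨ ReflTransGen F t w := by
    intro w h1 h2 hc
    by_cases h : ReflTransGen F t w
    · exact .inr h
    · refine .inl (Cov.prune (hc.back (S := fun q => ReflTransGen F q w) ?_ .refl))
      intro p q e hq
      refine ⟨⟨e, fun hp => ?_⟩, .head e hq⟩
      rcases ReflTransGen.total_of_right_unique (r := F) (fun _ _ _ h h' => f.fn h h') hp (hq.head e)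
        with h' | h'
      · exact h h'
      · exact h2 (rtg_eq_of_no_out (noout w h1 h2) h')
  have huniq : ∀ w w', w ∉ R0 → w ≠ t → w' ∉ R0 → w' ≠ t → ReflTransGen F t w →
      ReflTransGen F t w' → w = w' := by
    intro w w' h1 h2 h1' h2' c c'
    rcases ReflTransGen.total_of_right_unique (r := F) (fun _ _ _ h h' => f.fn h h') c c' with h | h
    · exact rtg_eq_of_no_out (noout w h1 h2) h
    · exact (rtg_eq_of_no_out (noout w' h1' h2') h).symm
  have hexp : ∀ a ∈ Γ.A, (∀ w, ¬ F a w) → ∀ w, ¬ F0 a w := fun a _ h w h' => h w (hF0F _ _ h')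
  by_cases hs : ∃ s, s ∉ R0 ∧ s ≠ t ∧ ReflTransGen F t s
  swap
  · refine .inr ⟨F0, f0, fun w h1 h2 hc => (hcov w h1 h2 hc).resolve_right ?_, hexp⟩
    exact fun h => hs ⟨w, h1, h2, h⟩
  obtain ⟨s, hs1, hs2, hs3⟩ := hs
  obtain ⟨Z, hZR, haZ, hU, hx⟩ := aug f0 (fun h => h.2.prune) ha2
    ((f.mem e2).resolve_left ha2t) (fun w h => h.1.2 c2)
  by_cases hsZ : s ∈ bd Γ Z ∧ ∀ p, ¬ F0 p s
  · obtain ⟨_, H, hH, hHs, hkeep, hHexp, _⟩ := hx s hsZ.1 hsZ.2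
    refine .inr ⟨H, hH, ?_, ?_⟩
    · intro w h1 h2 hc
      by_cases hws : w = s
      · exact hws ▸ hHs
      · refine hkeep w (fun h => h1 (hZR h)) ((hcov w h1 h2 hc).resolve_right fun h => hws ?_)
        exact huniq _ _ h1 h2 hs1 hs2 h hs3
    · intro a' h1 h2
      exact hHexp a' h1 (fun h => h2 y2 (h ▸ e2)) (hexp a' h1 h2)
  · refine .inl ⟨Z, hZR, fun u x => F0 u x ∧ u ∈ Z, a2,
      f0.mono (fun _ _ h => h.1) (fun _ _ h => h.2), ha2, haZ, fun w h => h.1.1.2 c2, ?_⟩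
    intro w hw
    by_cases hp : ∃ p, F0 p w
    · obtain ⟨p, hp⟩ := hp
      exact .inl (cov_restrict hU hw ((show Cov Γ F0 p from hp.2.prune).step hp))
    · push Not at hp
      obtain ⟨hwR, _⟩ := hx w hw hp
      by_cases hwt : w = t
      · exact .inr (.inl hwt)
      · refine .inr (.inr ⟨hwR, fun hc => ?_⟩)
        rcases hcov w hwR hwt hc with h | h
        · obtain ⟨p, h', _⟩ := h.pred (bd_notA hw)
          exact hp p h'
        · exact hsZ (huniq _ _ hwR hwt hs1 hs2 h hs3 ▸ ⟨hw, hp⟩)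

/-- Rerouting a flow so that it no longer leaves the vertex `t`: either this succeeds without
losing coverage outside, or a hindrance inside `R0` relative to `t` appears. -/
theorem rv {R0 : Set V} {F : V → V → Prop} {t : V} (f : Flow Γ (insert t R0) F) (htA : t ∉ Γ.A) :
    (∃ Z ⊆ R0, ∃ FZ a, Flow Γ Z FZ ∧ a ∈ Γ.A ∧ a ∈ Z ∧ (∀ w, ¬ FZ a w) ∧
      ∀ w ∈ bd Γ Z, Cov Γ FZ w ∨ w = t ∨ (w ∉ R0 ∧ ¬ Cov Γ F w)) ∨
    ∃ F', Flow Γ R0 F' ∧ (∀ w, w ∉ R0 → w ≠ t → Cov Γ F w → Cov Γ F' w) ∧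
      ∀ a ∈ Γ.A, (∀ w, ¬ F a w) → ∀ w, ¬ F' a w := by
  rcases rv_aux f.prune (fun h => h.2.prune) htA with
    ⟨Z, h1, FZ, a, h2, h3, h4, h5, h6⟩ | ⟨F', h1, h2, h3⟩
  · refine .inl ⟨Z, h1, FZ, a, h2, h3, h4, h5, fun w hw => ?_⟩
    rcases h6 w hw with h | h | ⟨h, h'⟩
    exacts [.inl h, .inr (.inl h), .inr (.inr ⟨h, fun hc => h' hc.prune⟩)]
  · exact .inr ⟨F', h1, fun w h h' hc => h2 w h h' hc.prune,
      fun a h h' => h3 a h fun w hw => h' w hw.1⟩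

theorem hind_insert {Y : Set V} {t : V} (htA : t ∉ Γ.A) (h : Hind Γ Y) : Hind Γ (insert t Y) := by
  obtain ⟨R, F, a, hw, ha, haR, hao⟩ := h
  by_cases htR : t ∈ R
  swap
  · refine ⟨R, F, a, hw.mono_Y (Set.subset_insert _ _) ?_, ha, haR, hao⟩
    rintro v hv (rfl | h)
    exacts [htR hv, hw.dY hv h]
  have hR : insert t (R \ {t}) = R := by simp [htR]
  have hat : a ≠ t := fun h => htA (h ▸ ha)
  have key : ∀ Z ⊆ R \ {t}, ∀ w ∈ bd Γ Z, w ∉ R \ {t} → w ∉ insert t Y → Cov Γ F w := by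
    rintro Z hZ w ⟨_, r, hr, e⟩ h1 h2
    refine hw.cov ⟨fun h => h1 ⟨h, fun h' => h2 (.inl h')⟩, r, (hZ hr).1, e⟩ fun h => h2 (.inr h)
  have hd : ∀ Z ⊆ R \ {t}, ∀ v ∈ Z, v ∉ insert t Y := by
    rintro Z hZ v hv (h | h)
    exacts [(hZ hv).2 h, hw.dY (hZ hv).1 h]
  rcases rv (hR.symm ▸ hw.toFlow) htA with
    ⟨Z, h1, FZ, a, h2, h3, h4, h5, h6⟩ | ⟨F', h1, h2, h3⟩
  · refine ⟨Z, FZ, a, ⟨h2, fun h => hw.dB (h1 h).1, fun h => hd Z h1 _ h, ?_⟩, h3, h4, h5⟩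
    intro w hwb hY
    rcases h6 w hwb with h | h | ⟨h, h'⟩
    exacts [h, absurd (.inl h) hY, absurd (key Z h1 w hwb h hY) h']
  · refine ⟨R \ {t}, F', a, ⟨h1, fun h => hw.dB h.1, fun h => hd _ subset_rfl _ h, ?_⟩, ha,
      ⟨haR, hat⟩, h3 a ha hao⟩
    intro w hwb hY
    exact h2 w hwb.1 (fun h => hY (.inl h)) (key _ subset_rfl w hwb hwb.1 hY)

/-- Deleting finitely many further vertices outside `A` cannot remove a hindrance. -/
theorem hind_union_finite {Y T : Set V} (hT : T.Finite) (hTA : ∀ t ∈ T, t ∉ Γ.A)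
    (h : Hind Γ Y) : Hind Γ (Y ∪ T) := by
  induction T, hT using Set.Finite.induction_on with
  | empty => simpa using h
  | @insert t T _ _ ih =>
    rw [Set.union_insert]
    exact hind_insert (hTA t (.inl rfl)) (ih fun t ht => hTA t (.inr ht))

/-- A wave can be rerouted so as not to leave any vertex of a finite set `T`, provided that
deleting `T` as well does not create a hindrance. -/
theorem avoid {Y T R : Set V} {F : V → V → Prop} (hT : T.Finite) (hTA : ∀ t ∈ T, t ∉ Γ.A)
    (h : ¬ Hind Γ (Y ∪ T)) (hw : Wave Γ Y R F) :
    ∃ F', Wave Γ Y R F' ∧ ∀ u w, F' u w → u ∉ T := by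
  induction T, hT using Set.Finite.induction_on with
  | empty => exact ⟨F, hw, fun u w _ h => h⟩
  | @insert t T _ _ ih =>
    have htA := hTA t (.inl rfl)
    rw [Set.union_insert] at h
    obtain ⟨F1, hw1, hF1⟩ := ih (fun t ht => hTA t (.inr ht)) fun h' => h (hind_insert htA h')
    by_cases htR : t ∈ R
    swap
    · refine ⟨F1, hw1, ?_⟩
      rintro u w e (rfl | h)
      exacts [htR (hw1.mem e), hF1 _ _ e h]
    have f1 : Flow Γ (insert t (R \ insert t T)) F1 := by
      refine hw1.toFlow.mono (fun _ _ h => h) fun u w e => ?_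
      by_cases hu : u = t
      · exact .inl hu
      · exact .inr ⟨hw1.mem e, by rintro (h | h); exacts [hu h, hF1 _ _ e h]⟩
    rcases rv f1 htA with ⟨Z, h1, FZ, a, h2, h3, h4, h5, h6⟩ | ⟨F', h1, h2, h3⟩
    · refine absurd ⟨Z, FZ, a, ⟨h2, fun h => hw.dB (h1 h).1, ?_, ?_⟩, h3, h4, h5⟩ h
      · rintro v hv (h | h | h)
        exacts [(h1 hv).2 (.inl h), hw.dY (h1 hv).1 h, (h1 hv).2 (.inr h)]
      · rintro w hwb hY
        rcases h6 w hwb with h' | h' | ⟨h', h''⟩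
        · exact h'
        · exact absurd (.inl h') hY
        · refine absurd (hw1.cov ⟨fun hR => h' ⟨hR, ?_⟩, ?_⟩ fun h => hY (.inr (.inl h))) h''
          · rintro (h | h)
            exacts [hY (.inl h), hY (.inr (.inr h))]
          · obtain ⟨_, r, hr, e⟩ := hwb
            exact ⟨r, (h1 hr).1, e⟩
    · refine ⟨F', ⟨h1.mono (fun _ _ h => h) fun _ _ e => (h1.mem e).1, hw.dB, hw.dY, ?_⟩,
        fun u w e => (h1.mem e).2⟩
      intro w hwb hY
      exact h2 w (fun h => hwb.1 h.1) (fun h => hwb.1 (h ▸ htR)) (hw1.cov hwb hY)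

/-- If deleting `x` creates a hindrance, then some wave ends in `x`. -/
theorem wave_to {Y : Set V} {x : V} (h : ¬ Hind Γ Y) (hx : Hind Γ (insert x Y)) :
    ∃ R F, Wave Γ Y R F ∧ x ∈ bd Γ R := by
  obtain ⟨R, F, a, hw, ha, haR, hao⟩ := hx
  have hdY : ∀ v ∈ R, v ∉ Y := fun v hv h => hw.dY hv (.inr h)
  have hxb : x ∈ bd Γ R ∧ ¬ Cov Γ F x := by
    by_contra hc
    refine h ⟨R, F, a, ⟨hw.toFlow, hw.dB, fun h => hdY _ h, fun {w} hwb hY => ?_⟩, ha, haR, hao⟩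
    by_cases hwx : w = x
    · subst hwx
      by_contra h'
      exact hc ⟨hwb, h'⟩
    · exact hw.cov hwb (by rintro (h | h); exacts [hwx h, hY h])
  obtain ⟨Z, hZR, haZ, hU, hx⟩ := aug hw.toFlow.prune (fun h => h.2.prune) ha haR
    (fun w h => hao w h.1)
  have hpx : ∀ p, ¬ prune Γ F p x := fun p hp => hxb.2 (hp.2.step hp.1)
  by_cases hxZ : x ∈ bd Γ Z
  · obtain ⟨_, H, hH, hHx, hkeep, _⟩ := hx x hxZ hpx
    refine ⟨R, H, ⟨hH, hw.dB, fun h => hdY _ h, fun {w} hwb hY => ?_⟩, hxb.1⟩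
    by_cases hwx : w = x
    · exact hwx ▸ hHx
    · exact hkeep w (fun h => hwb.1 (hZR h))
        (hw.cov hwb (by rintro (h | h); exacts [hwx h, hY h])).prune
  · refine absurd ⟨Z, fun u x => prune Γ F u x ∧ u ∈ Z, a,
      ⟨hw.toFlow.prune.mono (fun _ _ h => h.1) (fun _ _ h => h.2), fun h => hw.dB (hZR h),
        fun h => hdY _ (hZR h), fun {w} hwb hY => ?_⟩, ha, haZ, fun w h => hao w h.1.1⟩ h
    have hwx : w ≠ x := fun h => hxZ (h ▸ hwb)
    apply cov_restrict hU hwb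
    by_cases hp : ∃ p, prune Γ F p w
    · obtain ⟨p, hp⟩ := hp
      exact (show Cov Γ (prune Γ F) p from hp.2.prune).step hp
    · push Not at hp
      obtain ⟨hwR, _⟩ := hx w hwb hp
      obtain ⟨_, r, hr, e⟩ := hwb
      exact (hw.cov ⟨hwR, r, hZR hr, e⟩ (by rintro (h | h); exacts [hwx h, hY h])).prune

end Waves

section OnePoint
variable {V : Type*} {Γ : Web V}

/-! ### Linking a single vertex -/

/-- `S` carries disjoint paths, inside `S`, from all vertices of `A ∩ S` to `B`. -/
def Lk (Γ : Web V) (S : Set V) : Prop :=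
  ∃ F : V → V → Prop, (∀ u w, F u w → Γ.Adj u w ∧ u ∈ S ∧ w ∈ S) ∧
    (∀ u w w', F u w → F u w' → w = w') ∧ (∀ u u' w, F u w → F u' w → u = u') ∧
    ∀ a ∈ Γ.A, a ∈ S → ∃ b ∈ Γ.B, ReflTransGen F a b

theorem rtg_self {G : V → V → Prop} {a x : V} (c : ReflTransGen G a x) :
    ReflTransGen (fun u w => G u w ∧ ReflTransGen G a u) a x := by
  induction c with
  | refl => exact .refl
  | tail h e ih => exact ih.tail ⟨e, h⟩

/-- Reachability is witnessed by a finite simple path. -/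
theorem simple_path {E : V → V → Prop} {a b : V} (c : ReflTransGen E a b) :
    ∃ (S : Set V) (F : V → V → Prop), S.Finite ∧ a ∈ S ∧ ReflTransGen F a b ∧
      (∀ u w, F u w → E u w ∧ u ∈ S ∧ w ∈ S) ∧ (∀ u w w', F u w → F u w' → w = w') ∧
      (∀ u u' w, F u w → F u' w → u = u') ∧ (∀ w, ¬ F b w) ∧ ∀ x ∈ S, ReflTransGen F a x := by
  induction c with
  | refl =>
    exact ⟨{a}, fun _ _ => False, Set.finite_singleton a, rfl, .refl, by simp, by simp, by simp,
      by simp, by rintro x rfl; exact .refl⟩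
  | @tail p q _ e ih =>
    obtain ⟨S, F, hS, haS, hc, h1, h2, h3, h4, h5⟩ := ih
    by_cases hq : q ∈ S
    · have hsub : {x | ReflTransGen (fun u w => F u w ∧ u ≠ q) a x} ⊆ S := by
        intro x hx
        rcases ReflTransGen.cases_tail hx with rfl | ⟨y, _, hy⟩
        · exact haS
        · exact (h1 _ _ hy.1).2.2
      refine ⟨{x | ReflTransGen (fun u w => F u w ∧ u ≠ q) a x},
        fun u w => (F u w ∧ u ≠ q) ∧ ReflTransGen (fun u w => F u w ∧ u ≠ q) a u,
        hS.subset hsub, .refl, ?_, ?_, ?_, ?_, ?_, ?_⟩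
      · exact rtg_self (rtg_first (h5 q hq))
      · rintro u w ⟨h, h'⟩
        exact ⟨(h1 _ _ h.1).1, h', ReflTransGen.tail h' h⟩
      · rintro u w w' ⟨h, _⟩ ⟨h', _⟩
        exact h2 _ _ _ h.1 h'.1
      · rintro u w w' ⟨h, _⟩ ⟨h', _⟩
        exact h3 _ _ _ h.1 h'.1
      · rintro w ⟨h, _⟩
        exact h.2 rfl
      · exact fun x hx => rtg_self hx
    · refine ⟨insert q S, fun u w => F u w ∨ (u = p ∧ w = q), hS.insert q, .inr haS, ?_, ?_, ?_,
        ?_, ?_, ?_⟩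
      · exact (rtg_mono (fun _ _ h => .inl h) hc).tail (.inr ⟨rfl, rfl⟩)
      · rintro u w (h | ⟨rfl, rfl⟩)
        · exact ⟨(h1 _ _ h).1, .inr (h1 _ _ h).2.1, .inr (h1 _ _ h).2.2⟩
        · refine ⟨e, .inr ?_, .inl rfl⟩
          rcases hc.cases_tail with rfl | ⟨y, _, hy⟩
          · exact haS
          · exact (h1 _ _ hy).2.2
      · rintro u w w' (h | ⟨rfl, rfl⟩) (h' | ⟨h', rfl⟩)
        exacts [h2 _ _ _ h h', absurd (h' ▸ h) (h4 _), absurd h' (h4 _), rfl]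
      · rintro u u' w (h | ⟨rfl, rfl⟩) (h' | ⟨h', h6⟩)
        exacts [h3 _ _ _ h h', absurd (h6 ▸ (h1 _ _ h).2.2) hq, absurd (h1 _ _ h').2.2 hq, h'.symm]
      · rintro w (h | ⟨h, _⟩)
        · exact hq (h1 _ _ h).2.1
        · subst h
          rcases hc.cases_tail with rfl | ⟨y, _, hy⟩
          · exact hq haS
          · exact hq (h1 _ _ hy).2.2
      · rintro x (rfl | hx)
        · exact (rtg_mono (fun _ _ h => .inl h) hc).tail (.inr ⟨rfl, rfl⟩)
        · exact rtg_mono (fun _ _ h => .inl h) (h5 x hx)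

/-- Let all finite subsets of `C` be deletable from the web with `Y0` deleted. Then the maximal
waves relative to the finite subsets `Q` of `C` combine to a single wave relative to the set of
those vertices of `C` that none of them swallows. -/
theorem combine {Y0 C : Set V} (hCA : ∀ c ∈ C, c ∉ Γ.A)
    (hC : ∀ Q : Set V, Q.Finite → Q ⊆ C → ¬ Hind Γ (Y0 ∪ Q)) (Q0 : Finset V)
    (hQ0 : (Q0 : Set V) ⊆ C) :
    Rmax Γ (Y0 ∪ Q0) ⊆ Rmax Γ (Y0 ∪ {c | c ∈ C ∧
      ∀ Q : Finset V, (Q : Set V) ⊆ C → c ∉ Rmax Γ (Y0 ∪ Q)}) := by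
  classical
  set C0 := {c | c ∈ C ∧ ∀ Q : Finset V, (Q : Set V) ⊆ C → c ∉ Rmax Γ (Y0 ∪ Q)} with hC0
  have hsh : ∀ c, ∃ Q : Finset V, (Q : Set V) ⊆ C ∧ (c ∈ C → c ∉ C0 → c ∈ Rmax Γ (Y0 ∪ Q)) := by
    intro c
    by_cases h : ∃ Q : Finset V, (Q : Set V) ⊆ C ∧ c ∈ Rmax Γ (Y0 ∪ Q)
    · obtain ⟨Q, h1, h2⟩ := h
      exact ⟨Q, h1, fun _ _ => h2⟩
    · refine ⟨∅, by simp, fun h1 h2 => absurd ⟨h1, fun Q hQ hc => h ⟨Q, hQ, hc⟩⟩ h2⟩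
  choose sh hshC hsh using hsh
  let QQ : ℕ → Finset (Finset V) := fun n =>
    Nat.rec {Q0} (fun _ P => P.biUnion fun Q => Q.image sh) n
  have hQQ : ∀ n, QQ (n + 1) = (QQ n).biUnion fun Q => Q.image sh := fun _ => rfl
  have hQQC : ∀ n, ∀ Q ∈ QQ n, (Q : Set V) ⊆ C := by
    intro n
    induction n with
    | zero => intro Q hQ; rw [Finset.mem_singleton.1 hQ]; exact hQ0
    | succ n ih =>
      intro Q hQ
      rw [hQQ] at hQ
      simp only [Finset.mem_biUnion, Finset.mem_image] at hQ
      obtain ⟨_, _, c, _, rfl⟩ := hQ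
      exact hshC c
  obtain ⟨q, hq⟩ := (Set.countable_iUnion fun n => (QQ n).countable_toSet).exists_eq_range
    ⟨Q0, Set.mem_iUnion.2 ⟨0, by simp [QQ]⟩⟩
  have hmem : ∀ n, ∃ m, q n ∈ QQ m := by
    intro n
    have h := Set.mem_range_self (f := q) n
    rw [← hq] at h
    exact Set.mem_iUnion.1 h
  have hmem' : ∀ Q m, Q ∈ QQ m → ∃ n, q n = Q := by
    intro Q m h
    have h' : Q ∈ Set.range q := by
      rw [← hq]
      exact Set.mem_iUnion.2 ⟨m, Finset.mem_coe.2 h⟩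
    exact h'
  have hqC : ∀ n, (q n : Set V) ⊆ C := by
    intro n
    obtain ⟨m, hm⟩ := hmem n
    exact hQQC m _ hm
  have hqsh : ∀ n, ∀ c ∈ q n, ∃ m, q m = sh c := by
    intro n c hc
    obtain ⟨m, hm⟩ := hmem n
    refine hmem' _ (m + 1) ?_
    rw [hQQ]
    simp only [Finset.mem_biUnion, Finset.mem_image]
    exact ⟨q n, hm, c, hc, rfl⟩
  obtain ⟨n0, hn0⟩ : ∃ n, q n = Q0 := hmem' Q0 0 (by simp [QQ])
  let Rn : ℕ → Set V := fun n => {v | ∃ k < n, v ∈ Rmax Γ (Y0 ∪ q k)}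
  let Pn : ℕ → Set V := fun n => {v | ∃ k < n, v ∈ q k}
  have hRn : ∀ n, Rn (n + 1) = Rn n ∪ Rmax Γ (Y0 ∪ q n) := by
    intro n
    ext v
    simp only [Rn, Set.mem_ofPred_eq, Set.mem_union, Nat.lt_succ_iff_lt_or_eq]
    constructor
    · rintro ⟨k, hk | rfl, h⟩
      exacts [.inl ⟨k, hk, h⟩, .inr h]
    · rintro (⟨k, hk, h⟩ | h)
      exacts [⟨k, .inl hk, h⟩, ⟨n, .inr rfl, h⟩]
  have hPC : ∀ n, Pn n ⊆ C := by
    rintro n v ⟨k, _, h⟩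
    exact hqC k h
  have hPfin : ∀ n, (Pn n).Finite := by
    intro n
    have : Pn n = ⋃ k ∈ Finset.range n, (q k : Set V) := by
      ext v; simp [Pn]
    rw [this]
    exact Set.Finite.biUnion (Finset.finite_toSet _) fun k _ => (q k).finite_toSet
  have hRY : ∀ k, ∀ v ∈ Rmax Γ (Y0 ∪ q k), v ∉ Y0 := by
    rintro k v ⟨R, F, hw, hv⟩ h
    exact hw.dY hv (.inl h)
  have step : ∀ n (F : {F // Wave Γ (Y0 ∪ (Pn n \ Rn n)) (Rn n) F}),
      ∃ F' : {F // Wave Γ (Y0 ∪ (Pn (n + 1) \ Rn (n + 1))) (Rn (n + 1)) F},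
        ∀ u w, F.1 u w → F'.1 u w := by
    rintro n ⟨F, hF⟩
    obtain ⟨G, hG⟩ := exists_max_wave Γ (Y0 ∪ q n)
    obtain ⟨G', hG', hav⟩ := avoid (hPfin n) (fun t ht => hCA t (hPC n ht))
      (by rw [Set.union_assoc]
          exact hC _ ((q n).finite_toSet.union (hPfin n)) (Set.union_subset (hqC n) (hPC n))) hG
    have hPs : ∀ w, w ∈ Pn n ∨ w ∈ q n → w ∈ Pn (n + 1) := by
      rintro w (⟨k, hk, h⟩ | h)
      exacts [⟨k, hk.trans n.lt_succ_self, h⟩, ⟨n, n.lt_succ_self, h⟩]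
    have hj : Wave Γ (Y0 ∪ (Pn (n + 1) \ Rn (n + 1))) (Rn n ∪ Rmax Γ (Y0 ∪ q n))
        (joinF Γ F (Rn n) G') := by
      refine join_wave hF hG' ?_ ?_ ?_
      · rintro u w e _ (h | h)
        exacts [hRY _ _ (hG'.mem e) h, hav _ _ e h.1]
      · rintro v hv (h | h)
        · exact hv.elim (fun hv => hF.dY hv (.inl h)) fun hv => hRY _ _ hv h
        · exact h.2 (hRn n ▸ hv)
      · intro w hw hb
        rw [← hRn] at hb
        refine ⟨?_, ?_⟩
        · rintro _ (h | h)
          exacts [hw (.inl h), hw (.inr ⟨hPs _ (.inl h.1), hb.1⟩)]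
        · rintro _ _ (h | h)
          exacts [hw (.inl h), hw (.inr ⟨hPs _ (.inr h), hb.1⟩)]
    rw [← hRn] at hj
    exact ⟨⟨_, hj⟩, fun u w h => .inl h⟩
  choose next hnext using step
  have base : Wave Γ (Y0 ∪ (Pn 0 \ Rn 0)) (Rn 0) (fun _ _ => False) := by
    have : Rn 0 = ∅ := by ext v; simp [Rn]
    rw [this]
    exact wave_empty _
  let s : (n : ℕ) → {F // Wave Γ (Y0 ∪ (Pn n \ Rn n)) (Rn n) F} := fun n =>
    Nat.rec ⟨_, base⟩ (fun n F => next n F) n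
  have hs : ∀ n u w, (s n).1 u w → (s (n + 1)).1 u w := fun n => hnext n (s n)
  have hmono : ∀ m n, m ≤ n → ∀ u w, (s m).1 u w → (s n).1 u w := by
    intro m n hmn
    induction hmn with
    | refl => exact fun _ _ h => h
    | step _ ih => exact fun u w h => hs _ _ _ (ih u w h)
  have hfin : Wave Γ (Y0 ∪ C0) {v | ∃ n, v ∈ Rn n} (fun u w => ∃ n, (s n).1 u w) := by
    refine ⟨⟨?_, ?_, ?_, ?_⟩, ?_, ?_, ?_⟩
    · rintro u w ⟨n, h⟩; exact (s n).2.adj h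
    · rintro u w ⟨n, h⟩; exact ⟨n, (s n).2.mem h⟩
    · rintro u w w' ⟨m, h⟩ ⟨n, h'⟩
      exact (s (max m n)).2.fn (hmono _ _ (le_max_left _ _) _ _ h)
        (hmono _ _ (le_max_right _ _) _ _ h')
    · rintro u w w' ⟨m, h⟩ ⟨n, h'⟩
      exact (s (max m n)).2.inj (hmono _ _ (le_max_left _ _) _ _ h)
        (hmono _ _ (le_max_right _ _) _ _ h')
    · rintro v ⟨n, h⟩; exact (s n).2.dB h
    · rintro v ⟨n, k, _, h⟩ (h' | h')
      · exact hRY _ _ h h'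
      · exact h'.2 (q k) (hqC k) h
    · rintro w ⟨h1, r, ⟨n, hr⟩, e⟩ hw
      refine ((s n).2.cov ⟨fun h => h1 ⟨n, h⟩, r, hr, e⟩ ?_).mono fun _ _ h => ⟨n, h⟩
      rintro (h | ⟨⟨k, hk, h⟩, _⟩)
      · exact hw (.inl h)
      · have hc := hsh w (hqC k h) fun h => hw (.inr h)
        obtain ⟨m, hm⟩ := hqsh k w h
        exact h1 ⟨m + 1, m, m.lt_succ_self, hm ▸ hc⟩
  refine Set.Subset.trans ?_ hfin.sub_Rmax
  intro v hv
  exact ⟨n0 + 1, n0, n0.lt_succ_self, hn0.symm ▸ hv⟩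

/-- In an unhindered web any vertex of `A` can be linked to `B` by a path whose deletion leaves
an unhindered web. -/
theorem one_point {Y : Set V} (h : ¬ Hind Γ Y) {a0 : V} (ha0 : a0 ∈ Γ.A) (haY : a0 ∉ Y) :
    ∃ S : Set V, S.Finite ∧ a0 ∈ S ∧ (∀ v ∈ S, v ∉ Y) ∧ Lk Γ S ∧ ¬ Hind Γ (Y ∪ S) := by
  classical
  set Y0 := insert a0 Y with hY0
  let good : Set (Set V) := {C | (∀ c ∈ C, c ∉ Γ.A) ∧ (∀ c ∈ C, c ∉ Y) ∧
    (∀ Q : Set V, Q.Finite → Q ⊆ C → ¬ Hind Γ (Y0 ∪ Q)) ∧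
    ∀ c ∈ C, ReflTransGen (fun u w => Γ.Adj u w ∧ w ∈ C) a0 c}
  have h0 : ∅ ∈ good := by
    refine ⟨by simp, by simp, ?_, by simp⟩
    intro Q _ hQ hH
    rw [Set.subset_empty_iff.1 hQ, Set.union_empty, hY0, ← Set.union_singleton] at hH
    exact h (hind_of_union_A (by simpa using ha0) hH)
  obtain ⟨C, _, hm⟩ := zorn_subset_nonempty good (by
    intro c hc hch hne
    refine ⟨⋃₀ c, ⟨?_, ?_, ?_, ?_⟩, fun s hs => Set.subset_sUnion_of_mem hs⟩
    · rintro v ⟨s, hs, hv⟩; exact (hc hs).1 v hv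
    · rintro v ⟨s, hs, hv⟩; exact (hc hs).2.1 v hv
    · intro Q hQ hQc
      obtain ⟨s, hs, hQs⟩ := DirectedOn.exists_mem_subset_of_finite_of_subset_sUnion hne
        hch.directedOn hQ hQc
      exact (hc hs).2.2.1 Q hQ hQs
    · rintro v ⟨s, hs, hv⟩
      exact rtg_mono (fun u w h => ⟨h.1, s, hs, h.2⟩) ((hc hs).2.2.2 v hv)) ∅ h0
  obtain ⟨hCA, hCY, hCf, hCr⟩ := hm.1
  by_cases hB : ∃ b ∈ Γ.B, ReflTransGen (fun u w => Γ.Adj u w ∧ w ∈ C) a0 b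
  · obtain ⟨b, hb, hc⟩ := hB
    obtain ⟨S, F, hS, haS, hc, h1, h2, h3, h4, h5⟩ := simple_path hc
    have hSC : ∀ v ∈ S, v = a0 ∨ v ∈ C := by
      intro v hv
      rcases (h5 v hv).cases_tail with rfl | ⟨y, _, hy⟩
      exacts [.inl rfl, .inr (h1 _ _ hy).1.2]
    refine ⟨S, hS, haS, ?_, ⟨F, fun u w h => ⟨(h1 _ _ h).1.1, (h1 _ _ h).2⟩, h2, h3, ?_⟩, ?_⟩
    · intro v hv
      rcases hSC v hv with rfl | h
      exacts [haY, hCY v h]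
    · intro a ha haS
      rcases hSC a haS with rfl | h
      · exact ⟨b, hb, hc⟩
      · exact absurd ha (hCA a h)
    · have := hCf (S \ {a0}) (hS.subset Set.sdiff_subset) (fun v hv => (hSC v hv.1).resolve_left hv.2)
      convert this using 2
      ext v
      simp only [hY0, Set.mem_union, Set.mem_insert_iff, Set.mem_sdiff, Set.mem_singleton_iff]
      by_cases hv : v = a0
      · subst hv; simp [haS]
      · simp [hv]
  exfalso
  push Not at hB
  have hCB : ∀ c ∈ C, c ∉ Γ.B := fun c hc hb => hB c hb (hCr c hc)
  set C0 := {c | c ∈ C ∧ ∀ Q : Finset V, (Q : Set V) ⊆ C → c ∉ Rmax Γ (Y0 ∪ Q)} with hC0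
  obtain ⟨F, hF⟩ := exists_max_wave Γ (Y0 ∪ C0)
  have hcomb := fun Q hQ => combine (Γ := Γ) (Y0 := Y0) hCA hCf Q hQ
  have hext : ∀ r y, (r = a0 ∨ r ∈ C) → Γ.Adj r y → y ∉ C → y ∉ Y → y ∉ Rmax Γ (Y0 ∪ C0) →
      y ∈ bd Γ (Rmax Γ (Y0 ∪ C0)) := by
    intro r y hr e hyC hyY hyR
    have hyA := notA_of_adj e
    have hn : insert y C ∉ good := fun hg =>
      hyC (hm.2 hg (Set.subset_insert _ _) (Set.mem_insert _ _))
    have hQ : ∃ Q : Set V, Q.Finite ∧ Q ⊆ insert y C ∧ Hind Γ (Y0 ∪ Q) := by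
      by_contra hQ
      push Not at hQ
      refine hn ⟨?_, ?_, hQ, ?_⟩
      · rintro c (rfl | hc); exacts [hyA, hCA c hc]
      · rintro c (rfl | hc); exacts [hyY, hCY c hc]
      · have hr' : ReflTransGen (fun u w => Γ.Adj u w ∧ w ∈ insert y C) a0 r := by
          rcases hr with rfl | hr
          · exact .refl
          · exact rtg_mono (fun u w h => ⟨h.1, .inr h.2⟩) (hCr r hr)
        rintro c (rfl | hc)
        · exact hr'.tail ⟨e, .inl rfl⟩
        · exact rtg_mono (fun u w h => ⟨h.1, .inr h.2⟩) (hCr c hc)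
    obtain ⟨Q, hQf, hQs, hQh⟩ := hQ
    have hQ' : Q \ {y} ⊆ C := fun v hv => (hQs hv.1).resolve_left hv.2
    have hyQ : y ∈ Q := by
      by_contra hyQ
      exact hCf Q hQf (fun v hv => (hQs hv).resolve_left fun h => hyQ (h ▸ hv)) hQh
    have hfin : (Q \ {y}).Finite := hQf.subset Set.sdiff_subset
    have : insert y (Y0 ∪ (Q \ {y})) = Y0 ∪ Q := by
      rw [← Set.union_insert]
      simp [hyQ]
    obtain ⟨R, F', hw, hyb⟩ := wave_to (hCf _ hfin hQ') (this ▸ hQh)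
    have hsub := hcomb hfin.toFinset (by simpa using hQ')
    rw [hfin.coe_toFinset] at hsub
    obtain ⟨_, r', hr', e'⟩ := hyb
    exact ⟨hyR, r', hsub (hw.sub_Rmax hr'), e'⟩
  refine h ⟨Rmax Γ (Y0 ∪ C0) ∪ insert a0 C0, F, a0, ⟨?_, ?_, ?_, ?_⟩, ha0, .inr (.inl rfl), ?_⟩
  · exact hF.toFlow.mono (fun _ _ h => h) fun _ _ h => .inl (hF.mem h)
  · rintro v (hv | rfl | hv)
    · exact hF.dB hv
    · exact fun hb => hB _ hb .refl
    · exact hCB v hv.1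
  · rintro v (hv | rfl | hv)
    · exact fun hY => hF.dY hv (.inl (.inr hY))
    · exact haY
    · exact hCY v hv.1
  · rintro w ⟨hw, r, hr, e⟩ hwY
    have hwR : w ∉ Rmax Γ (Y0 ∪ C0) := fun h => hw (.inl h)
    have hwa : w ≠ a0 := fun h => hw (.inr (.inl h))
    have hwC0 : w ∉ C0 := fun h => hw (.inr (.inr h))
    have hwC : w ∉ C := by
      intro hwC
      apply hwC0
      refine ⟨hwC, fun Q hQ hwQ => hwR (hcomb Q hQ hwQ)⟩
    refine hF.cov ?_ ?_
    · rcases hr with hr | rfl | hr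
      · exact ⟨hwR, r, hr, e⟩
      · exact hext _ w (.inl rfl) e hwC hwY hwR
      · exact hext _ w (.inr hr.1) e hwC hwY hwR
    · rintro ((h | h) | h)
      exacts [hwa h, hwY h, hwC0 h]
  · intro w hw
    exact hF.dY (hF.mem hw) (.inl (.inl rfl))

end OnePoint

section Closures
variable {V : Type*} {Γ : Web V}

/-! ### Closures and transfinite recursion -/

section SetTheory
universe u
open Cardinal
variable {W : Type u}

/-- `N` is closed under the set-valued function `g` of finite sequences. -/
def Cl (g : List W → Set W) (N : Set W) : Prop := ∀ l : List W, (∀ v ∈ l, v ∈ N) → g l ⊆ N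

theorem mk_union_lt {κ : Cardinal.{u}} (hκ : ℵ₀ ≤ κ) {S T : Set W} (hS : #S < κ) (hT : #T < κ) :
    #(S ∪ T : Set W) < κ :=
  (mk_union_le S T).trans_lt (add_lt_of_lt hκ hS hT)

theorem mk_iUnion_lt {κ : Cardinal.{u}} (hκ : κ.IsRegular) {ι : Type u} (hι : #ι < κ)
    {S : ι → Set W} (hS : ∀ i, #(S i) < κ) : #(⋃ i, S i : Set W) < κ := by
  refine (mk_iUnion_le_sum_mk).trans_lt ?_
  exact sum_lt_of_isRegular hκ hι hS

theorem mk_iUnion_nat_lt {κ : Cardinal.{u}} (hκ : κ.IsRegular) (h0 : ℵ₀ < κ)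
    {S : ℕ → Set W} (hS : ∀ i, #(S i) < κ) : #(⋃ i, S i : Set W) < κ := by
  have : (⋃ i, S i) = ⋃ i : ULift.{u} ℕ, S i.down := by
    ext x; simp
  rw [this]
  exact mk_iUnion_lt hκ (by simpa using h0) fun i => hS _

/-- One step towards the closure of `S` under `g`. -/
def clStep (g : List W → Set W) (S : Set W) : Set W := S ∪ ⋃ l : List S, g (l.map Subtype.val)

theorem mk_clStep_lt {κ : Cardinal.{u}} (hκ : κ.IsRegular) (h0 : ℵ₀ < κ) {g : List W → Set W}
    (hg : ∀ l, #(g l) < κ) {S : Set W} (hS : #S < κ) : #(clStep g S) < κ := by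
  refine mk_union_lt hκ.aleph0_le hS (mk_iUnion_lt hκ ?_ fun l => hg _)
  exact (mk_list_le_max _).trans_lt (max_lt h0 hS)

/-- The closure of `S` under `g`. -/
def clos (g : List W → Set W) (S : Set W) : Set W := ⋃ n : ℕ, (clStep g)^[n] S

theorem clStep_mono_nat (g : List W → Set W) (S : Set W) :
    Monotone fun n : ℕ => (clStep g)^[n] S := by
  refine monotone_nat_of_le_succ fun n => ?_
  rw [Function.iterate_succ_apply']
  exact Set.subset_union_left

/-- A finite sequence of members of an increasing union lies in one of the sets. -/
theorem list_mem_chain {ι : Type*} [LinearOrder ι] [Nonempty ι] {S : ι → Set W} (hS : Monotone S)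
    {l : List W} (hl : ∀ v ∈ l, v ∈ ⋃ i, S i) : ∃ i, ∀ v ∈ l, v ∈ S i := by
  induction l with
  | nil => exact ⟨Classical.arbitrary ι, by simp⟩
  | cons a l ih =>
    obtain ⟨i, hi⟩ := ih fun v hv => hl v (by simp [hv])
    obtain ⟨j, hj⟩ := Set.mem_iUnion.1 (hl a (by simp))
    refine ⟨max i j, fun v hv => ?_⟩
    rcases List.mem_cons.1 hv with rfl | hv
    · exact hS (le_max_right _ _) hj
    · exact hS (le_max_left _ _) (hi v hv)

theorem clos_sub (g : List W → Set W) (S : Set W) : S ⊆ clos g S :=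
  Set.subset_iUnion (fun n : ℕ => (clStep g)^[n] S) 0

theorem clos_cl (g : List W → Set W) (S : Set W) : Cl g (clos g S) := by
  intro l hl x hx
  obtain ⟨n, hn⟩ := list_mem_chain (clStep_mono_nat g S) hl
  refine Set.mem_iUnion.2 ⟨n + 1, ?_⟩
  rw [Function.iterate_succ_apply']
  refine .inr (Set.mem_iUnion.2 ⟨l.attach.map fun v => ⟨v.1, hn _ v.2⟩, ?_⟩)
  simpa [List.map_map, Function.comp_def] using hx

theorem clos_lt {κ : Cardinal.{u}} (hκ : κ.IsRegular) (h0 : ℵ₀ < κ) {g : List W → Set W}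
    (hg : ∀ l, #(g l) < κ) {S : Set W} (hS : #S < κ) : #(clos g S) < κ := by
  refine mk_iUnion_nat_lt hκ h0 fun n => ?_
  induction n with
  | zero => simpa using hS
  | succ n ih =>
    rw [Function.iterate_succ_apply']
    exact mk_clStep_lt hκ h0 hg ih

theorem exists_closed {κ : Cardinal.{u}} (hκ : κ.IsRegular) (h0 : ℵ₀ < κ) {g : List W → Set W}
    (hg : ∀ l, #(g l) < κ) {S : Set W} (hS : #S < κ) : ∃ N, S ⊆ N ∧ #N < κ ∧ Cl g N :=
  ⟨clos g S, clos_sub g S, clos_lt hκ h0 hg hS, clos_cl g S⟩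

theorem exists_closed_le {κ : Cardinal.{u}} (h0 : ℵ₀ ≤ κ) {g : List W → Set W}
    (hg : ∀ l, #(g l) ≤ κ) {S : Set W} (hS : #S ≤ κ) : ∃ N, S ⊆ N ∧ #N ≤ κ ∧ Cl g N := by
  obtain ⟨N, h1, h2, h3⟩ := exists_closed (isRegular_succ h0)
    (h0.trans_lt (Order.lt_succ κ)) (fun l => Order.lt_succ_iff.2 (hg l)) (Order.lt_succ_iff.2 hS)
  exact ⟨N, h1, Order.lt_succ_iff.1 h2, h3⟩

/-- A small set has a small superset closed under two injective partial functions and their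
inverses. -/
theorem exists_sat {κ : Cardinal.{u}} (hκ : κ.IsRegular) (h0 : ℵ₀ < κ) {F F' : W → W → Prop}
    (fn : ∀ u w w', F u w → F u w' → w = w') (inj : ∀ u u' w, F u w → F u' w → u = u')
    (fn' : ∀ u w w', F' u w → F' u w' → w = w') (inj' : ∀ u u' w, F' u w → F' u' w → u = u')
    {S : Set W} (hS : #S < κ) :
    ∃ N, S ⊆ N ∧ #N < κ ∧ (∀ u w, F u w → (u ∈ N ↔ w ∈ N)) ∧
      ∀ u w, F' u w → (u ∈ N ↔ w ∈ N) := by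
  have sub : ∀ T : Set W, T.Subsingleton → #T < κ := fun T hT =>
    (mk_le_one_iff_set_subsingleton.2 hT).trans_lt (one_lt_aleph0.trans h0)
  obtain ⟨N, h1, h2, h3⟩ := exists_closed hκ h0
    (g := fun l => {w | ∃ x, l.head? = some x ∧ F x w} ∪ {w | ∃ x, l.head? = some x ∧ F w x} ∪
      ({w | ∃ x, l.head? = some x ∧ F' x w} ∪ {w | ∃ x, l.head? = some x ∧ F' w x})) (by
      intro l
      refine mk_union_lt hκ.aleph0_le (mk_union_lt hκ.aleph0_le ?_ ?_)
        (mk_union_lt hκ.aleph0_le ?_ ?_) <;> apply sub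
      all_goals
        rintro w ⟨x, hx, h⟩ w' ⟨x', hx', h'⟩
        rw [hx] at hx'
        cases hx'
      exacts [fn _ _ _ h h', inj _ _ _ h h', fn' _ _ _ h h', inj' _ _ _ h h']) hS
  refine ⟨N, h1, h2, fun u w h => ⟨fun hu => ?_, fun hw => ?_⟩,
    fun u w h => ⟨fun hu => ?_, fun hw => ?_⟩⟩
  · exact h3 [u] (by simpa using hu) (.inl (.inl ⟨u, rfl, h⟩))
  · exact h3 [w] (by simpa using hw) (.inl (.inr ⟨w, rfl, h⟩))
  · exact h3 [u] (by simpa using hu) (.inr (.inl ⟨u, rfl, h⟩))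
  · exact h3 [w] (by simpa using hw) (.inr (.inr ⟨w, rfl, h⟩))

theorem mk_Iio_lt_ord {κ : Cardinal.{u}} (i : κ.ord.ToType) : #(Set.Iio i) < κ := by
  have h := mk_Iio_lt i (by rw [mk_ord_toType, Ordinal.type_toType])
  rwa [mk_ord_toType] at h

/-- Dependent choice along a well-order. -/
theorem transfinite {I : Type*} [LinearOrder I] [WellFoundedLT I] {α : Type*} [Nonempty α]
    (P : I → (I → α) → α → Prop)
    (congr : ∀ i f f' x, (∀ j < i, f j = f' j) → P i f x → P i f' x)
    (step : ∀ i f, (∀ j < i, P j f (f j)) → ∃ x, P i f x) : ∃ f : I → α, ∀ i, P i f (f i) := by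
  classical
  let ext : ∀ i : I, (∀ j, j < i → α) → I → α := fun i rec j =>
    if h : j < i then rec j h else Classical.arbitrary α
  let wf := (wellFounded_lt : WellFounded (α := I) (· < ·))
  let f : I → α := wf.fix fun i rec => Classical.epsilon (P i (ext i rec))
  have hf : ∀ i, f i = Classical.epsilon (P i (ext i fun j _ => f j)) := fun i => by
    simp only [f]; rw [wf.fix_eq]
  have hext : ∀ i, ∀ j < i, ext i (fun j _ => f j) j = f j := fun i j h => by simp [ext, h]
  refine ⟨f, fun i => ?_⟩
  induction i using wf.induction with
  | _ i ih =>
    obtain ⟨x, hx⟩ := step i f ih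
    rw [hf]
    refine congr i _ _ _ (hext i) (Classical.epsilon_spec (p := P i (ext i fun j _ => f j)) ⟨x, ?_⟩)
    exact congr i _ _ _ (fun j hj => (hext i j hj).symm) hx

end SetTheory

end Closures

section TightSets
variable {V : Type*} {Γ : Web V}

/-! ### Tight sets: what a hindrance in the web minus a small set looks like -/

/-- `Z` and `F` witness that the paths of a wave with region `Z`, avoiding `N`, end at all boundary
vertices of `Z` outside `Y ∪ P`, and moreover at `v ∈ P`. -/
structure TightAt (Γ : Web V) (Y N P Z : Set V) (v : V) (F : V → V → Prop) : Prop
    extends Wave Γ (Y ∪ (P \ {v})) Z F where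
  covv : Cov Γ F v
  hd : ∀ u w, F u w → w ∈ N → w = v

/-- `P ⊆ N` is tight: some region `Z` outside `N` has all of `P` on its boundary, and for
each `v ∈ P` the vertex `v` together with the boundary vertices of `Z` outside `Y ∪ P` can be
covered by disjoint paths from `A` within `Z`. -/
def Tight (Γ : Web V) (Y N P : Set V) : Prop :=
  P ⊆ N ∧ ∃ Z, (∀ v ∈ Z, v ∉ N) ∧ P ⊆ bd Γ Z ∧ ∀ v ∈ P, ∃ F, TightAt Γ Y N P Z v F

/-- A hindrance after deleting `N` yields a tight `P ⊆ N` and a hindrance relative to `Y ∪ P` whose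
paths avoid `P`. Here `P` consists of the vertices of `N` on the boundary of the region that can be
reached by alternating paths from the unmatched vertex `a`. -/
theorem tight_of_hind {Y N : Set V} (h : Hind Γ (Y ∪ N)) :
    ∃ P Z F a, Tight Γ Y N P ∧ P ⊆ bd Γ Z ∧ Wave Γ (Y ∪ P) Z F ∧ a ∈ Γ.A ∧ a ∈ Z ∧
      (∀ w, ¬ F a w) ∧ ∀ u w, F u w → w ∉ P := by
  obtain ⟨R, F0, a, hw, haA, haR, hao⟩ := h
  have hRN : ∀ v ∈ R, v ∉ N := fun v hv h => hw.dY hv (.inr h)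
  let F1 : V → V → Prop := fun u w => F0 u w ∧ w ∉ N
  have c1 : ∀ w ∈ bd Γ R, w ∉ Y → w ∉ N → Cov Γ F1 w := by
    intro w hwb hY hN
    refine (hw.cov hwb (by rintro (h | h); exacts [hY h, hN h])).back (S := fun x => x ∉ N) ?_ hN
    intro p q e hq
    exact ⟨⟨e, hq⟩, hRN p (hw.mem e)⟩
  have f1 : Flow Γ R F1 := hw.toFlow.mono (fun _ _ h => h.1) (fun _ _ h => hw.mem h.1)
  let F2 := prune Γ F1
  have f2 : Flow Γ R F2 := f1.prune
  have hd2 : ∀ u w, F2 u w → w ∉ N := fun u w h => h.1.2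
  have tails : ∀ {p q}, F2 p q → Cov Γ F2 p := fun h => h.2.prune
  have hao2 : ∀ w, ¬ F2 a w := fun w h => hao w h.1.1
  obtain ⟨Z, hZR, haZ, hU, hx⟩ := aug f2 tails haA haR hao2
  let P : Set V := {x | x ∈ bd Γ Z ∧ (∀ p, ¬ F2 p x) ∧ x ∉ Y}
  have hPN : P ⊆ N := by
    rintro x ⟨hxb, hxp, hxY⟩
    by_contra hN
    have hxR := (hx x hxb hxp).1
    obtain ⟨p, e, -⟩ := (c1 x ⟨hxR, hxb.2.imp fun r hr => ⟨hZR hr.1, hr.2⟩⟩ hxY hN).prune.pred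
      (bd_notA hxb)
    exact hxp p e
  have hZd : ∀ {v}, v ∈ Z → ∀ Q ⊆ P, v ∉ Y ∪ Q := by
    rintro v hv Q hQ (h | h)
    exacts [hw.dY (hZR hv) (.inl h), hRN v (hZR hv) (hPN (hQ h))]
  have cP : ∀ w ∈ bd Γ Z, w ∉ Y → w ∉ P → Cov Γ F2 w := by
    intro w hwb hY hP
    by_cases hp : ∃ p, F2 p w
    · obtain ⟨p, e⟩ := hp
      exact (tails e).step e
    · exact absurd ⟨hwb, fun p e => hp ⟨p, e⟩, hY⟩ hP
  refine ⟨P, Z, fun u w => F2 u w ∧ u ∈ Z, a, ⟨hPN, Z, fun v hv => hRN v (hZR hv),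
    fun x hx => hx.1, ?_⟩, fun x hx => hx.1, ?_, haA, haZ, fun w h => hao2 w h.1,
    fun u w h hP => hd2 u w h.1 (hPN hP)⟩
  · intro v hv
    obtain ⟨hvR, H, fH, cH, keep, -, heads, back⟩ := hx v hv.1 hv.2.1
    have bk : ∀ p x, (x ∈ Z ∨ x ∈ bd Γ Z) → H p x → p ∈ Z := fun p x h e => back p x h e
    refine ⟨fun u w => H u w ∧ u ∈ Z, ⟨⟨fH.mono (fun _ _ h => h.1) fun _ _ h => h.2,
      fun h => hw.dB (hZR h), fun h => hZd h _ Set.sdiff_subset, ?_⟩, ?_, ?_⟩⟩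
    · intro w hwb hwn
      by_cases hwv : w = v
      · subst hwv; exact cov_restrict bk hwb cH
      · refine cov_restrict bk hwb (keep w hwb.1 (cP w hwb (fun h => hwn (.inl h)) fun h => ?_))
        exact hwn (.inr ⟨h, hwv⟩)
    · exact cov_restrict bk hv.1 cH
    · rintro u w ⟨h, -⟩ hN
      rcases heads u w h with h | h | ⟨p', h⟩
      exacts [h, absurd hN (hRN w h), absurd hN (hd2 _ _ h)]
  · refine ⟨f2.mono (fun _ _ h => h.1) fun _ _ h => h.2, fun h => hw.dB (hZR h),
      fun h => hZd h _ subset_rfl, fun {w} hwb hwn => ?_⟩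
    refine cov_restrict hU hwb (cP w hwb (fun h => hwn (.inl h)) fun h => hwn (.inr h))

/-! ### Partial hindrances and their extensions -/

/-- A partial hindrance: a region `R` and edges `F` forming a wave once the defect set `D` is
deleted as well, together with the small set `N` on which `F` has been settled. -/
structure St (V : Type*) where
  R : Set V
  F : V → V → Prop
  D : Set V
  N : Set V

/-- The invariants of a partial hindrance leaving `a` unmatched; `Q` is the set of admissible
defects. -/
structure Good (Γ : Web V) (Y Q : Set V) (a : V) (s : St V) : Prop where
  wave : Wave Γ (Y ∪ s.D) s.R s.F
  hd : ∀ {u w}, s.F u w → w ∉ s.D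
  sat : ∀ {u w}, s.F u w → (u ∈ s.N ↔ w ∈ s.N)
  DQ : s.D ⊆ Q
  DN : s.D ⊆ s.N
  Dbd : s.D ⊆ bd Γ s.R
  aR : a ∈ s.R
  aN : a ∈ s.N
  ao : ∀ w, ¬ s.F a w

/-- `t` extends `s`: the edges of `s` may only be changed at vertices that are new in `N`, and no
vertex seen by `s` becomes a defect again. -/
structure Ext (Γ : Web V) (s t : St V) : Prop where
  R : s.R ⊆ t.R
  N : s.N ⊆ t.N
  D : ∀ x, x ∈ t.D → x ∈ s.R ∨ x ∈ bd Γ s.R → x ∈ s.D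
  sat : ∀ {u w}, s.F u w → (u ∈ t.N ↔ w ∈ t.N)
  F : ∀ {u}, u ∈ s.R → (u ∈ t.N → u ∈ s.N) → ∀ w, (s.F u w ↔ t.F u w)

variable {Y Q : Set V} {a : V} {s t r : St V}

theorem Good.rfl (h : Good Γ Y Q a s) : Ext Γ s s :=
  ⟨subset_rfl, subset_rfl, fun _ h _ => h, h.sat, fun _ _ _ => Iff.rfl⟩

theorem seen_mono {R R' : Set V} (h : R ⊆ R') {x : V} (hx : x ∈ R ∨ x ∈ bd Γ R) :
    x ∈ R' ∨ x ∈ bd Γ R' := by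
  rcases hx with hx | ⟨_, p, hp, e⟩
  · exact .inl (h hx)
  · exact mem_or_bd (h hp) e

theorem Ext.trans (hs : Good Γ Y Q a s) (h : Ext Γ s t) (h' : Ext Γ t r) : Ext Γ s r := by
  refine ⟨h.R.trans h'.R, h.N.trans h'.N, ?_, ?_, ?_⟩
  · intro x hx hs
    exact h.D x (h'.D x hx (seen_mono h.R hs)) hs
  · intro u w e
    by_cases hu : u ∈ t.N → u ∈ s.N
    · exact h'.sat ((h.F (hs.wave.mem e) hu w).1 e)
    · push Not at hu
      exact ⟨fun _ => h'.N ((h.sat e).1 hu.1), fun _ => h'.N hu.1⟩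
  · intro u hu hN w
    rw [h.F hu (fun h1 => hN (h'.N h1)) w]
    exact h'.F (h.R hu) (fun h1 => h.N (hN h1)) w

/-- The limit of a chain of partial hindrances. -/
def lim (Γ : Web V) (C : Set (St V)) : St V where
  R := {x | ∃ s ∈ C, x ∈ s.R}
  F u w := ∃ s ∈ C, ∀ t ∈ C, Ext Γ s t → t.F u w
  D := {x | ∃ s ∈ C, ∀ t ∈ C, Ext Γ s t → x ∈ t.D}
  N := {x | ∃ s ∈ C, x ∈ s.N}

section Limit
variable {C : Set (St V)}

theorem upper (hg : ∀ s ∈ C, Good Γ Y Q a s)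
    (hc : ∀ s ∈ C, ∀ t ∈ C, Ext Γ s t ∨ Ext Γ t s) {s t : St V} (hs : s ∈ C) (ht : t ∈ C) :
    ∃ r ∈ C, Ext Γ s r ∧ Ext Γ t r := by
  rcases hc s hs t ht with h | h
  · exact ⟨t, ht, h, (hg t ht).rfl⟩
  · exact ⟨s, hs, (hg s hs).rfl, h⟩

theorem lim_stab (hg : ∀ s ∈ C, Good Γ Y Q a s)
    (hc : ∀ s ∈ C, ∀ t ∈ C, Ext Γ s t ∨ Ext Γ t s) (hs : s ∈ C) {u : V} (hu : u ∈ s.R)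
    (hN : u ∈ (lim Γ C).N → u ∈ s.N) (w : V) : s.F u w ↔ (lim Γ C).F u w := by
  constructor
  · intro h
    exact ⟨s, hs, fun t ht e => (e.F hu (fun h => hN ⟨t, ht, h⟩) w).1 h⟩
  · rintro ⟨s', hs', h⟩
    obtain ⟨r, hr, h1, h2⟩ := upper hg hc hs hs'
    exact (h1.F hu (fun h => hN ⟨r, hr, h⟩) w).2 (h r hr h2)

theorem lim_ext (hg : ∀ s ∈ C, Good Γ Y Q a s)
    (hc : ∀ s ∈ C, ∀ t ∈ C, Ext Γ s t ∨ Ext Γ t s) (hs : s ∈ C) : Ext Γ s (lim Γ C) := by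
  refine ⟨fun x h => ⟨s, hs, h⟩, fun x h => ⟨s, hs, h⟩, ?_, ?_, fun hu hN w =>
    lim_stab hg hc hs hu hN w⟩
  · rintro x ⟨s', hs', h⟩ hx
    obtain ⟨r, hr, h1, h2⟩ := upper hg hc hs hs'
    exact h1.D x (h r hr h2) hx
  · intro u w e
    constructor
    · rintro ⟨s', hs', h⟩
      obtain ⟨r, hr, h1, h2⟩ := upper hg hc hs hs'
      exact ⟨r, hr, (h1.sat e).1 (h2.N h)⟩
    · rintro ⟨s', hs', h⟩
      obtain ⟨r, hr, h1, h2⟩ := upper hg hc hs hs'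
      exact ⟨r, hr, (h1.sat e).2 (h2.N h)⟩

theorem lim_good (hg : ∀ s ∈ C, Good Γ Y Q a s)
    (hc : ∀ s ∈ C, ∀ t ∈ C, Ext Γ s t ∨ Ext Γ t s) (hne : C.Nonempty) :
    Good Γ Y Q a (lim Γ C) := by
  have up := @upper _ _ _ _ _ _ hg hc
  -- an edge of the limit together with a member of the chain: both seen by one state
  have edge : ∀ {u w}, (lim Γ C).F u w → ∀ s ∈ C, ∃ r ∈ C, Ext Γ s r ∧ r.F u w := by
    rintro u w ⟨s', hs', h⟩ s hs
    obtain ⟨r, hr, h1, h2⟩ := up hs hs'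
    exact ⟨r, hr, h1, h r hr h2⟩
  have edge2 : ∀ {u w u' w'}, (lim Γ C).F u w → (lim Γ C).F u' w' →
      ∃ r ∈ C, r.F u w ∧ r.F u' w' := by
    rintro u w u' w' ⟨s, hs, h⟩ ⟨s', hs', h'⟩
    obtain ⟨r, hr, h1, h2⟩ := up hs hs'
    exact ⟨r, hr, h r hr h1, h' r hr h2⟩
  have defect : ∀ {x}, x ∈ (lim Γ C).D → ∀ s ∈ C, ∃ r ∈ C, Ext Γ s r ∧ x ∈ r.D := by
    rintro x ⟨s', hs', h⟩ s hs
    obtain ⟨r, hr, h1, h2⟩ := up hs hs'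
    exact ⟨r, hr, h1, h r hr h2⟩
  obtain ⟨s0, hs0⟩ := hne
  have hRD : ∀ {x}, x ∈ (lim Γ C).R → x ∉ (lim Γ C).D := by
    rintro x ⟨s, hs, h⟩ hD
    obtain ⟨r, hr, h1, h2⟩ := defect hD s hs
    exact (hg r hr).wave.dY (h1.R h) (.inr h2)
  refine ⟨⟨⟨?_, ?_, ?_, ?_⟩, ?_, ?_, ?_⟩, ?_, ?_, ?_, ?_, ?_, ?_, ?_, ?_⟩
  · intro u w h
    obtain ⟨r, hr, -, h⟩ := edge h s0 hs0
    exact (hg r hr).wave.adj h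
  · intro u w h
    obtain ⟨r, hr, -, h⟩ := edge h s0 hs0
    exact ⟨r, hr, (hg r hr).wave.mem h⟩
  · intro u w w' h h'
    obtain ⟨r, hr, h, h'⟩ := edge2 h h'
    exact (hg r hr).wave.fn h h'
  · intro u w w' h h'
    obtain ⟨r, hr, h, h'⟩ := edge2 h h'
    exact (hg r hr).wave.inj h h'
  · rintro v ⟨s, hs, h⟩
    exact (hg s hs).wave.dB h
  · rintro v ⟨s, hs, h⟩ (hY | hD)
    · exact (hg s hs).wave.dY h (.inl hY)
    · exact hRD ⟨s, hs, h⟩ hD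
  · rintro w ⟨hwR, p, ⟨s, hs, hp⟩, e⟩ hw
    have hb : ∀ t ∈ C, Ext Γ s t → w ∈ bd Γ t.R := fun t ht h =>
      ⟨fun h' => hwR ⟨t, ht, h'⟩, p, h.R hp, e⟩
    obtain ⟨t, ht, hst, htD⟩ : ∃ t ∈ C, Ext Γ s t ∧ w ∉ t.D := by
      by_contra hcon
      push Not at hcon
      exact hw (.inr ⟨s, hs, hcon⟩)
    have cv : ∀ r ∈ C, Ext Γ t r → Cov Γ r.F w := by
      intro r hr htr
      refine (hg r hr).wave.cov (hb r hr (hst.trans (hg s hs) htr)) ?_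
      rintro (h | h)
      · exact hw (.inl h)
      · exact htD (htr.D w h (.inr (hb t ht hst)))
    by_cases hN : w ∈ (lim Γ C).N
    · obtain ⟨t', ht', hN⟩ := hN
      obtain ⟨r, hr, h1, h2⟩ := up ht ht'
      refine (cv r hr h1).back (S := fun x => x ∈ r.N) ?_ (h2.N hN)
      intro p q e hq
      have hp := ((hg r hr).sat e).2 hq
      exact ⟨(lim_stab hg hc hr ((hg r hr).wave.mem e) (fun _ => hp) q).1 e, hp⟩
    · refine (cv t ht (hg t ht).rfl).back (S := fun x => x ∉ (lim Γ C).N) ?_ hN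
      intro p q e hq
      have hp : p ∉ (lim Γ C).N := fun h => hq (((lim_ext hg hc ht).sat e).1 h)
      exact ⟨(lim_stab hg hc ht ((hg t ht).wave.mem e) (fun h => absurd h hp) q).1 e, hp⟩
  · intro u w h hD
    obtain ⟨s, hs, h⟩ := h
    obtain ⟨r, hr, h1, h2⟩ := defect hD s hs
    exact (hg r hr).hd (h r hr h1) h2
  · intro u w h
    constructor
    · rintro ⟨s, hs, hu⟩
      obtain ⟨r, hr, h1, h⟩ := edge h s hs
      exact ⟨r, hr, ((hg r hr).sat h).1 (h1.N hu)⟩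
    · rintro ⟨s, hs, hu⟩
      obtain ⟨r, hr, h1, h⟩ := edge h s hs
      exact ⟨r, hr, ((hg r hr).sat h).2 (h1.N hu)⟩
  · intro x hx
    obtain ⟨r, hr, -, h⟩ := defect hx s0 hs0
    exact (hg r hr).DQ h
  · intro x hx
    obtain ⟨r, hr, -, h⟩ := defect hx s0 hs0
    exact ⟨r, hr, (hg r hr).DN h⟩
  · intro x hx
    obtain ⟨r, hr, -, h⟩ := defect hx s0 hs0
    obtain ⟨-, p, hp, e⟩ := (hg r hr).Dbd h
    exact ⟨fun h => hRD h hx, p, ⟨r, hr, hp⟩, e⟩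
  · exact ⟨s0, hs0, (hg s0 hs0).aR⟩
  · exact ⟨s0, hs0, (hg s0 hs0).aN⟩
  · intro w h
    obtain ⟨r, hr, -, h⟩ := edge h s0 hs0
    exact (hg r hr).ao w h

end Limit

end TightSets

section Repair
variable {V : Type*} {Γ : Web V}
variable {Y Q : Set V} {a : V} {s t r : St V}

/-! ### Repairing one defect -/

/-- The edges of a partial hindrance after rerouting through a tight set: the new paths `FU`, the
old edges in `N`, and the old edges outside `N` that are disjoint from the region `Z`. -/
def reroute (Γ : Web V) (F : V → V → Prop) (N Z : Set V) (FU : V → V → Prop) : V → V → Prop :=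
  fun u w => FU u w ∨ (F u w ∧ u ∈ N) ∨ (F u w ∧ u ∉ N ∧ u ∉ Z ∧ w ∉ Z ∧ w ∉ bd Γ Z)

theorem reroute_flow {Y' P R Z N D : Set V} {v : V} {F FU : V → V → Prop} (f : Flow Γ R F)
    (hU : TightAt Γ Y' N P Z v FU) (hZN : ∀ x ∈ Z, x ∉ N) (hd : ∀ {u w}, F u w → w ∉ D)
    (hv : v ∈ D) (sat : ∀ {u w}, F u w → (u ∈ N ↔ w ∈ N)) :
    Flow Γ (R ∪ Z) (reroute Γ F N Z FU) := by
  have k1 : ∀ {u w u'}, FU u w → F u' w → u' ∈ N → False := fun {u w u'} h h' hN =>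
    hd h' ((hU.hd u w h ((sat h').1 hN)) ▸ hv)
  have k2 : ∀ {u w}, FU u w → w ∉ Z → w ∉ bd Γ Z → False := fun h h1 h2 =>
    (mem_or_bd (hU.mem h) (hU.adj h)).elim h1 h2
  refine ⟨?_, ?_, ?_, ?_⟩
  · rintro u w (h | ⟨h, _⟩ | ⟨h, _⟩)
    exacts [hU.adj h, f.adj h, f.adj h]
  · rintro u w (h | ⟨h, _⟩ | ⟨h, _⟩)
    exacts [.inr (hU.mem h), .inl (f.mem h), .inl (f.mem h)]
  · rintro u w w' (h | ⟨h, h1⟩ | ⟨h, -, h1, -⟩) (h' | ⟨h', h1'⟩ | ⟨h', -, h1', -⟩)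
    exacts [hU.fn h h', absurd h1' (hZN u (hU.mem h)), absurd (hU.mem h) h1',
      absurd h1 (hZN u (hU.mem h')), f.fn h h', f.fn h h', absurd (hU.mem h') h1, f.fn h h',
      f.fn h h']
  · rintro u u' w (h | ⟨h, h1⟩ | ⟨h, -, -, h1, h2⟩) (h' | ⟨h', h1'⟩ | ⟨h', -, -, h1', h2'⟩)
    exacts [hU.inj h h', (k1 h h' h1').elim, (k2 h h1' h2').elim,
      (k1 h' h h1).elim, f.inj h h', f.inj h h', (k2 h' h1 h2).elim, f.inj h h',
      f.inj h h']

theorem reroute_cov {P Z N' : Set V} {v w : V} {FU : V → V → Prop}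
    (hs : Good Γ Y Q a s) (hU : TightAt Γ Y N' P Z v FU) (hPN : P ⊆ N')
    (sat : ∀ {u w}, s.F u w → (u ∈ N' ↔ w ∈ N'))
    (hw : w ∈ bd Γ (s.R ∪ Z)) (hwY : w ∉ Y) (hwD : w ∈ s.D → w = v)
    (hwP : w ∈ P → w ≠ v → w ∈ bd Γ s.R) : Cov Γ (reroute Γ s.F N' Z FU) w := by
  have cU : ∀ {x}, Cov Γ FU x → Cov Γ (reroute Γ s.F N' Z FU) x := fun c =>
    c.mono fun _ _ h => .inl h
  have cN : ∀ {x}, x ∈ N' → Cov Γ s.F x → Cov Γ (reroute Γ s.F N' Z FU) x := fun hx c =>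
    c.back (S := fun x => x ∈ N')
      (fun p q e hq => ⟨.inr (.inl ⟨e, (sat e).2 hq⟩), (sat e).2 hq⟩) hx
  by_cases hwv : w = v
  · subst hwv; exact cU hU.covv
  have hwD' : w ∉ Y ∪ s.D := by rintro (h | h); exacts [hwY h, hwv (hwD h)]
  by_cases hP : w ∈ P
  · exact cN (hPN hP) (hs.wave.cov (hwP hP hwv) hwD')
  by_cases hbZ : w ∈ bd Γ Z
  · exact cU (hU.cov hbZ (by rintro (h | h); exacts [hwY h, hP h.1]))
  have hbR : w ∈ bd Γ s.R := (bd_union hw).resolve_right hbZ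
  have c := hs.wave.cov hbR hwD'
  by_cases hN : w ∈ N'
  · exact cN hN c
  have hZ : w ∉ Z := fun h => hw.1 (.inr h)
  clear hw hwY hwD hwP hwv hwD' hP hbR
  obtain ⟨a', ha', c⟩ := c
  induction c with
  | refl => exact .of_A ha'
  | @tail p w _ e ih =>
    have hpN : p ∉ N' := fun h => hN ((sat e).1 h)
    have hpZ : p ∉ Z := fun h => (mem_or_bd h (hs.wave.adj e)).elim hZ hbZ
    refine Cov.step ?_ (.inr (.inr ⟨e, hpN, hpZ, hZ, hbZ⟩))
    by_cases hpb : p ∈ bd Γ Z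
    · refine cU (hU.cov hpb ?_)
      rintro (h | h)
      exacts [hs.wave.dY (hs.wave.mem e) (.inl h), hpN (hPN h.1)]
    · exact ih hpb hpN hpZ

/-- A defect `v` of a partial hindrance that lies in a tight set `P` of a set `N₁ ⊇ N` can be
repaired, at the cost of the new defects `P \ {v}`. -/
theorem good_step {P Z N1 N' : Set V} {v : V} {FU : V → V → Prop}
    (hs : Good Γ Y Q a s) (hv : v ∈ s.D) (hU : TightAt Γ Y N1 P Z v FU)
    (hPN : P ⊆ N1) (hPQ : P ⊆ Q) (hPZ : P ⊆ bd Γ Z) (hZN : ∀ x ∈ Z, x ∉ N1) (hN : s.N ⊆ N1)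
    (sat : ∀ {u w}, s.F u w → (u ∈ N1 ↔ w ∈ N1)) (hN' : N1 ⊆ N')
    (sat1 : ∀ u w, joinF Γ s.F s.R FU u w → (u ∈ N' ↔ w ∈ N'))
    (sat2 : ∀ u w, reroute Γ s.F N1 Z FU u w → (u ∈ N' ↔ w ∈ N')) :
    ∃ t : St V, Good Γ Y Q a t ∧ Ext Γ s t ∧ t.N = N' ∧ v ∉ t.D ∧ (v ∈ t.R ∨ v ∈ bd Γ t.R) := by
  have hDN1 : ∀ {x}, x ∈ s.D → x ∈ N1 := fun h => hN (hs.DN h)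
  have aN1 : a ∈ N1 := hN hs.aN
  have f1 : Flow Γ (s.R ∪ Z) (joinF Γ s.F s.R FU) := join_flow hs.wave.toFlow hU.toFlow
  have f2 : Flow Γ (s.R ∪ Z) (reroute Γ s.F N1 Z FU) :=
    reroute_flow hs.wave.toFlow hU hZN hs.hd hv sat
  let D2 : Set V := {x | x ≠ v ∧ (x ∈ s.D ∨ (x ∈ P ∧ x ∉ s.R ∧ x ∉ bd Γ s.R))}
  have D2N1 : ∀ {x}, x ∈ D2 → x ∈ N1 := by
    rintro x ⟨-, h | h⟩
    exacts [hDN1 h, hPN h.1]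
  have hdF : ∀ {u w}, s.F u w → w ∉ D2 := by
    rintro u w e ⟨-, h | ⟨-, h1, h2⟩⟩
    · exact hs.hd e h
    · exact (mem_or_bd (hs.wave.mem e) (hs.wave.adj e)).elim h1 h2
  have hdU : ∀ {u w}, FU u w → w ∉ D2 := fun {u w} e h => h.1 (hU.hd u w e (D2N1 h))
  have c1 : ∀ w ∈ bd Γ (s.R ∪ Z), w ∉ Y → w ∉ D2 → w ≠ v → Cov Γ (joinF Γ s.F s.R FU) w := by
    intro w hw hY hD hwv
    have hwD : w ∉ s.D := fun h => hD ⟨hwv, .inl h⟩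
    have hwYD : w ∉ Y ∪ s.D := by rintro (h | h); exacts [hY h, hwD h]
    by_cases hb : w ∈ bd Γ s.R
    · exact (hs.wave.cov hb hwYD).mono fun _ _ h => .inl h
    · have hbZ := (bd_union hw).resolve_left hb
      have hwR : w ∉ s.R := fun h => hw.1 (.inl h)
      refine join_cov (Y := Y ∪ s.D) hU.toFlow (fun w h h' => hs.wave.cov h h') ?_
        (hU.cov hbZ ?_) hwR fun h => absurd h hb
      · rintro u x e - (h | h)
        exacts [hU.dY (hU.mem e) (.inl h), hZN u (hU.mem e) (hDN1 h)]
      · rintro (h | h)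
        exacts [hY h, hD ⟨hwv, .inr ⟨h.1, hwR, hb⟩⟩]
  have c2 : ∀ w ∈ bd Γ (s.R ∪ Z), w ∉ Y → w ∉ D2 → Cov Γ (reroute Γ s.F N1 Z FU) w := by
    intro w hw hY hD
    refine reroute_cov hs hU hPN sat hw hY ?_ ?_
    · intro h; by_contra hne; exact hD ⟨hne, .inl h⟩
    · intro h hne
      by_contra hb
      exact hD ⟨hne, .inr ⟨h, fun h => hw.1 (.inl h), hb⟩⟩
  have vN' : v ∈ N' := hN' (hDN1 hv)
  have vbd : v ∈ bd Γ (s.R ∪ Z) := by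
    refine ⟨?_, ?_⟩
    · rintro (h | h)
      exacts [(hs.Dbd hv).1 h, hZN v h (hDN1 hv)]
    · obtain ⟨-, p, hp, e⟩ := hs.Dbd hv
      exact ⟨p, .inl hp, e⟩
  let F' : V → V → Prop := fun u w =>
    (u ∈ N' ∧ reroute Γ s.F N1 Z FU u w) ∨ (u ∉ N' ∧ joinF Γ s.F s.R FU u w)
  refine ⟨⟨s.R ∪ Z, F', D2, N'⟩, ⟨⟨⟨?_, ?_, ?_, ?_⟩, ?_, ?_, ?_⟩, ?_, ?_, ?_, ?_, ?_, ?_, ?_, ?_⟩,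
    ⟨?_, ?_, ?_, ?_, ?_⟩, rfl, fun h => h.1 rfl, .inr vbd⟩
  · rintro u w (⟨-, h⟩ | ⟨-, h⟩)
    exacts [f2.adj h, f1.adj h]
  · rintro u w (⟨-, h⟩ | ⟨-, h⟩)
    exacts [f2.mem h, f1.mem h]
  · rintro u w w' (⟨hn, h⟩ | ⟨hn, h⟩) (⟨hn', h'⟩ | ⟨hn', h'⟩)
    exacts [f2.fn h h', absurd hn hn', absurd hn' hn, f1.fn h h']
  · rintro u w w' (⟨hn, h⟩ | ⟨hn, h⟩) (⟨hn', h'⟩ | ⟨hn', h'⟩)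
    · exact f2.inj h h'
    · exact absurd ((sat1 _ _ h').2 ((sat2 _ _ h).1 hn)) hn'
    · exact absurd ((sat1 _ _ h).2 ((sat2 _ _ h').1 hn')) hn
    · exact f1.inj h h'
  · rintro x (h | h)
    exacts [hs.wave.dB h, hU.dB h]
  · rintro x (hx | hx) (h | h)
    · exact hs.wave.dY hx (.inl h)
    · obtain ⟨-, h | h⟩ := h
      exacts [hs.wave.dY hx (.inr h), h.2.1 hx]
    · exact hU.dY hx (.inl h)
    · exact hZN x hx (D2N1 h)
  · intro w hw hwn
    have hY : w ∉ Y := fun h => hwn (.inl h)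
    have hD : w ∉ D2 := fun h => hwn (.inr h)
    by_cases hwN : w ∈ N'
    · refine (c2 w hw hY hD).back (S := fun x => x ∈ N') ?_ hwN
      intro p q e hq
      have hp := (sat2 _ _ e).2 hq
      exact ⟨.inl ⟨hp, e⟩, hp⟩
    · refine (c1 w hw hY hD fun h => hwN (h ▸ vN')).back (S := fun x => x ∉ N') ?_ hwN
      intro p q e hq
      have hp : p ∉ N' := fun h => hq ((sat1 _ _ e).1 h)
      exact ⟨.inr ⟨hp, e⟩, hp⟩
  · rintro u w (⟨-, h | ⟨h, -⟩ | ⟨h, -⟩⟩ | ⟨-, h | ⟨h, -⟩⟩)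
    exacts [hdU h, hdF h, hdF h, hdF h, hdU h]
  · rintro u w (⟨-, h⟩ | ⟨-, h⟩)
    exacts [sat2 _ _ h, sat1 _ _ h]
  · rintro x ⟨-, h | h⟩
    exacts [hs.DQ h, hPQ h.1]
  · exact fun x h => hN' (D2N1 h)
  · rintro x ⟨-, h | ⟨h, h1, -⟩⟩
    · obtain ⟨h1, p, hp, e⟩ := hs.Dbd h
      refine ⟨?_, p, .inl hp, e⟩
      rintro (h' | h')
      exacts [h1 h', hZN x h' (hDN1 h)]
    · obtain ⟨h2, p, hp, e⟩ := hPZ h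
      refine ⟨?_, p, .inr hp, e⟩
      rintro (h' | h')
      exacts [h1 h', h2 h']
  · exact .inl hs.aR
  · exact hN' aN1
  · rintro w (⟨-, h | ⟨h, -⟩ | ⟨h, -⟩⟩ | ⟨-, h | ⟨h, -⟩⟩)
    exacts [hZN a (hU.mem h) aN1, hs.ao w h, hs.ao w h, hs.ao w h, hZN a (hU.mem h) aN1]
  · exact Set.subset_union_left
  · exact hN.trans hN'
  · rintro x ⟨-, h | ⟨-, h1, h2⟩⟩ hx
    · exact h
    · exact (hx.elim h1 h2).elim
  · intro u w h
    exact sat1 _ _ (.inl h)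
  · intro u hu hnew w
    by_cases hN'u : u ∈ N'
    · have huN1 : u ∈ N1 := hN (hnew hN'u)
      constructor
      · intro h; exact .inl ⟨hN'u, .inr (.inl ⟨h, huN1⟩)⟩
      · rintro (⟨-, h | ⟨h, -⟩ | ⟨h, -⟩⟩ | ⟨h, -⟩)
        exacts [absurd huN1 (hZN u (hU.mem h)), h, h, absurd hN'u h]
    · constructor
      · intro h; exact .inr ⟨hN'u, .inl h⟩
      · rintro (⟨h, -⟩ | ⟨-, h | ⟨-, h, -⟩⟩)
        exacts [absurd h hN'u, h, absurd hu h]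

end Repair

section Deletion
variable {V : Type*} {Γ : Web V}

/-! ### Deleting a small closed set keeps the web unhindered -/

section Closed
universe u
open Cardinal
variable {V : Type u} {Γ : Web V} {Y Q : Set V} {a : V} {κ : Cardinal.{u}}

theorem chain_insert {I : Type*} [LinearOrder I] {s0 : St V} {f : I → St V} {J : Set I}
    (h0 : Good Γ Y Q a s0) (hg : ∀ j ∈ J, Good Γ Y Q a (f j)) (hf0 : ∀ j ∈ J, Ext Γ s0 (f j))
    (hf : ∀ i ∈ J, ∀ j ∈ J, i < j → Ext Γ (f i) (f j)) :
    (∀ s ∈ insert s0 (f '' J), Good Γ Y Q a s) ∧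
    ∀ s ∈ insert s0 (f '' J), ∀ t ∈ insert s0 (f '' J), Ext Γ s t ∨ Ext Γ t s := by
  constructor
  · rintro s (rfl | ⟨j, hj, rfl⟩)
    exacts [h0, hg j hj]
  · rintro s (rfl | ⟨j, hj, rfl⟩) t (rfl | ⟨i, hi, rfl⟩)
    · exact .inl h0.rfl
    · exact .inl (hf0 i hi)
    · exact .inr (hf0 j hj)
    · rcases lt_trichotomy i j with h | rfl | h
      exacts [.inr (hf i hi j hj h), .inl (hg i hi).rfl, .inl (hf j hj i hi h)]

/-- If every defect of a small partial hindrance can be repaired by a small extension, then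
there is a hindrance. Otherwise `κ` repairs can be made in turn, always choosing a defect in the
earliest of the small sets `N` met so far that contains one. A defect left at the end lies in one
of these sets, which from then on contains all repaired vertices. These are `κ` distinct vertices,
as no vertex is repaired twice, but the set has fewer. -/
theorem hind_of_repair (hκ : κ.IsRegular)
    (rep : ∀ s v, Good Γ Y Q a s → #s.N < κ → v ∈ s.D → ∃ t : St V, Good Γ Y Q a t ∧ Ext Γ s t ∧
      #t.N < κ ∧ v ∉ t.D ∧ (v ∈ t.R ∨ v ∈ bd Γ t.R)) (haA : a ∈ Γ.A)
    {s0 : St V} (hs0 : Good Γ Y Q a s0) (hN0 : #s0.N < κ) : Hind Γ Y := by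
  by_contra hY
  have hD : ∀ s, Good Γ Y Q a s → s.D.Nonempty := by
    intro s hs
    by_contra hD
    rw [Set.not_nonempty_iff_eq_empty] at hD
    have hw := hs.wave
    rw [hD, Set.union_empty] at hw
    exact hY ⟨s.R, s.F, a, hw, haA, hs.aR, hs.ao⟩
  let I := κ.ord.ToType
  have hI : #I = κ := mk_ord_toType κ
  have hIio : ∀ i : I, #(Set.Iio i) < κ := fun i => mk_Iio_lt_ord i
  let C : I → (I → St V) → Set (St V) := fun i f => insert s0 (f '' Set.Iio i)
  let P : I → (I → St V × V) → St V × V → Prop := fun i f t =>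
    Good Γ Y Q a t.1 ∧ #t.1.N < κ ∧ Ext Γ s0 t.1 ∧ (∀ j < i, Ext Γ (f j).1 t.1) ∧
    t.2 ∈ (lim Γ (C i fun j => (f j).1)).D ∧ t.2 ∉ t.1.D ∧
    (t.2 ∈ t.1.R ∨ t.2 ∈ bd Γ t.1.R) ∧
    ∀ j < i, ∀ x ∈ (lim Γ (C i fun j => (f j).1)).D, x ∈ (f j).1.N → t.2 ∈ (f j).1.N
  obtain ⟨f, hf⟩ : ∃ f, ∀ i, P i f (f i) := by
    have : Nonempty (St V × V) := ⟨(s0, a)⟩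
    refine transfinite P ?_ ?_
    · rintro i f f' t h ⟨h1, h2, h3, h4, h5, h6, h7, h8⟩
      have hC : C i (fun j => (f j).1) = C i (fun j => (f' j).1) := by
        simp only [C]
        congr 1
        refine Set.image_congr fun j hj => ?_
        rw [h j hj]
      refine ⟨h1, h2, h3, fun j hj => h j hj ▸ h4 j hj, hC ▸ h5, h6, h7, fun j hj x hx => ?_⟩
      rw [← h j hj]
      exact h8 j hj x (hC ▸ hx)
    · intro i f ih
      obtain ⟨hg, hc⟩ := chain_insert (f := fun j => (f j).1) (J := Set.Iio i) hs0
        (fun j hj => (ih j hj).1) (fun j hj => (ih j hj).2.2.1)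
        (fun j hj k hk hjk => (ih k hk).2.2.2.1 j hjk)
      set l := lim Γ (C i fun j => (f j).1) with hl
      have lg : Good Γ Y Q a l := lim_good hg hc ⟨s0, .inl rfl⟩
      have le : ∀ s ∈ C i fun j => (f j).1, Ext Γ s l := fun s hs => lim_ext hg hc hs
      have lN : #l.N < κ := by
        have : l.N = s0.N ∪ ⋃ j : Set.Iio i, (f j).1.N := by
          ext x
          simp [hl, lim, C]
        rw [this]
        exact mk_union_lt hκ.aleph0_le hN0 (mk_iUnion_lt hκ (hIio i) fun j => (ih j j.2).2.1)
      obtain ⟨v, hv, hleast⟩ : ∃ v ∈ l.D, ∀ j < i, ∀ x ∈ l.D, x ∈ (f j).1.N → v ∈ (f j).1.N := by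
        by_cases hex : ∃ j, j < i ∧ ∃ x ∈ l.D, x ∈ (f j).1.N
        · obtain ⟨j, ⟨hj, v, hv, hvN⟩, hmin⟩ := (wellFounded_lt (α := I)).has_min
            {j | j < i ∧ ∃ x ∈ l.D, x ∈ (f j).1.N} hex
          refine ⟨v, hv, fun k hk x hx hxN => ?_⟩
          rcases (not_lt.1 (hmin k ⟨hk, x, hx, hxN⟩)).eq_or_lt with rfl | h
          exacts [hvN, ((ih k hk).2.2.2.1 j h).N hvN]
        · obtain ⟨v, hv⟩ := hD l lg
          exact ⟨v, hv, fun j hj x hx hxN => (hex ⟨j, hj, x, hx, hxN⟩).elim⟩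
      obtain ⟨t, h1, h2, h3, h4, h5⟩ := rep l v lg lN hv
      exact ⟨(t, v), h1, h3, (le _ (.inl rfl)).trans hs0 h2,
        fun j hj => (le _ (.inr ⟨j, hj, rfl⟩)).trans (ih j hj).1 h2, hv, h4, h5, hleast⟩
  obtain ⟨hg, hc⟩ := chain_insert (f := fun j => (f j).1) (J := Set.univ) hs0
    (fun j _ => (hf j).1) (fun j _ => (hf j).2.2.1)
    (fun j _ k _ hjk => (hf k).2.2.2.1 j hjk)
  have lg := lim_good hg hc ⟨s0, .inl rfl⟩
  obtain ⟨x, hx⟩ := hD _ lg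
  obtain ⟨i0⟩ : Nonempty I := by
    rw [← mk_ne_zero_iff, hI]
    exact hκ.pos.ne'
  -- a stage `j` whose small set contains the permanent defect `x`
  obtain ⟨j, hj⟩ : ∃ j, x ∈ (f j).1.N := by
    obtain ⟨s, (rfl | ⟨j, -, rfl⟩), hxs⟩ := lg.DN hx
    · exact ⟨i0, (hf i0).2.2.1.N hxs⟩
    · exact ⟨j, hxs⟩
  obtain ⟨k, hk⟩ : ∃ k, ∀ i, k < i → x ∈ (lim Γ (C i fun j => (f j).1)).D := by
    have sub : ∀ i, C i (fun j => (f j).1) ⊆ insert s0 ((fun j => (f j).1) '' Set.univ) :=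
      fun i => Set.insert_subset_insert (Set.image_mono (Set.subset_univ _))
    obtain ⟨s, (rfl | ⟨k, -, rfl⟩), h⟩ := hx
    · exact ⟨i0, fun i _ => ⟨s, .inl rfl, fun t ht e => h t (sub i ht) e⟩⟩
    · exact ⟨k, fun i hi => ⟨_, .inr ⟨k, hi, rfl⟩, fun t ht e => h t (sub i ht) e⟩⟩
  let m := max j k
  have hin : ∀ i : Set.Ioi m, (f i).2 ∈ (f j).1.N := fun i =>
    (hf i).2.2.2.2.2.2.2 j ((le_max_left _ _).trans_lt i.2) x
      (hk i ((le_max_right _ _).trans_lt i.2)) hj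
  have hlt : ∀ i i' : I, i < i' → (f i).2 ≠ (f i').2 := by
    intro i i' h e
    obtain ⟨hg, hc⟩ := chain_insert (f := fun j => (f j).1) (J := Set.Iio i') hs0
      (fun j _ => (hf j).1) (fun j _ => (hf j).2.2.1)
      (fun j _ k _ hjk => (hf k).2.2.2.1 j hjk)
    have he := lim_ext hg hc (s := (f i).1) (.inr ⟨i, h, rfl⟩)
    refine (hf i).2.2.2.2.2.1 (he.D _ ?_ (hf i).2.2.2.2.2.2.1)
    rw [e]
    exact (hf i').2.2.2.2.1
  have hinj : Function.Injective fun i : Set.Ioi m => (⟨(f i).2, hin i⟩ : (f j).1.N) := by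
    intro i i' h
    have h' : (f i).2 = (f i').2 := congrArg Subtype.val h
    rcases lt_trichotomy i i' with h1 | h1 | h1
    exacts [(hlt _ _ h1 h').elim, h1, (hlt _ _ h1 h'.symm).elim]
  have h1 : #(Set.Ioi m) < κ := (mk_le_of_injective hinj).trans_lt (hf j).2.1
  have h2 : (Set.univ : Set I) = Set.Iio m ∪ {m} ∪ Set.Ioi m := by
    ext i
    simp only [Set.mem_univ, Set.mem_union, Set.mem_Iio, Set.mem_singleton_iff, Set.mem_Ioi,
      true_iff]
    rcases lt_trichotomy i m with h | h | h <;> simp [h]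
  have h3 : #(Set.univ : Set I) < κ := by
    rw [h2]
    refine mk_union_lt hκ.aleph0_le (mk_union_lt hκ.aleph0_le (hIio m) ?_) h1
    simpa using one_lt_aleph0.trans_le hκ.aleph0_le
  rw [mk_univ, hI] at h3
  exact lt_irrefl _ h3

/-- In an unhindered web, deleting a sufficiently closed set of fewer than `κ` vertices leaves an
unhindered web, for every regular uncountable cardinal `κ`. -/
theorem closed_good (hκ : κ.IsRegular) (h0 : ℵ₀ < κ) (hY : ¬ Hind Γ Y) :
    ∃ G : List V → Set V, (∀ l, #(G l) < κ) ∧ ∀ N : Set V, #N < κ → Cl G N → ¬ Hind Γ (Y ∪ N) := by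
  classical
  -- the vertices that lie in tight sets of arbitrarily closed small sets
  let Pop : Set V := {v | ∀ g : List V → Set V, (∀ l, #(g l) < κ) →
    ∃ N : Set V, #N < κ ∧ Cl g N ∧ ∃ P, Tight Γ Y N P ∧ v ∈ P}
  have hgs : ∀ v, ∃ g : List V → Set V, (∀ l, #(g l) < κ) ∧
      (v ∉ Pop → ∀ N : Set V, #N < κ → Cl g N → ∀ P, Tight Γ Y N P → v ∉ P) := by
    intro v
    by_cases hv : v ∈ Pop
    · exact ⟨fun _ => ∅, fun _ => by simpa using aleph0_pos.trans h0, fun h => absurd hv h⟩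
    · simp only [Pop, Set.mem_ofPred_eq] at hv
      push Not at hv
      obtain ⟨g, hg, h⟩ := hv
      exact ⟨g, hg, fun _ => h⟩
  choose gs gs1 gs2 using hgs
  let G : List V → Set V := fun l => match l with
    | [] => ∅
    | v :: l => gs v l
  have hG : ∀ l, #(G l) < κ := by
    rintro (_ | ⟨v, l⟩)
    · simpa [G] using aleph0_pos.trans h0
    · exact gs1 v l
  have hpop : ∀ N : Set V, #N < κ → Cl G N → ∀ P, Tight Γ Y N P → P ⊆ Pop := by
    intro N hN hc P hP v hv
    by_contra hn
    refine gs2 v hn N hN ?_ P hP hv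
    intro l hl
    refine hc (v :: l) ?_
    intro x hx
    rcases List.mem_cons.1 hx with rfl | hx
    exacts [hP.1 hv, hl x hx]
  refine ⟨G, hG, fun N hN hc hh => ?_⟩
  obtain ⟨P, Z, F, a, hP, hPZ, hw, haA, haZ, hao, hd⟩ := tight_of_hind hh
  have rep : ∀ s v, Good Γ Y Pop a s → #s.N < κ → v ∈ s.D → ∃ t : St V, Good Γ Y Pop a t ∧
      Ext Γ s t ∧ #t.N < κ ∧ v ∉ t.D ∧ (v ∈ t.R ∨ v ∈ bd Γ t.R) := by
    intro s v hs hsN hv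
    have sub : ∀ T : Set V, T.Subsingleton → #T < κ := fun T hT =>
      (mk_le_one_iff_set_subsingleton.2 hT).trans_lt (one_lt_aleph0.trans h0)
    obtain ⟨N1, hN1, hcl, P', ⟨hPN, Z', hZN, hPZ', hU⟩, hvP⟩ := hs.DQ hv (fun l => s.N ∪ G l ∪
      ({w | ∃ x, l.head? = some x ∧ s.F x w} ∪ {w | ∃ x, l.head? = some x ∧ s.F w x})) (by
        intro l
        refine mk_union_lt hκ.aleph0_le (mk_union_lt hκ.aleph0_le hsN (hG l))
          (mk_union_lt hκ.aleph0_le ?_ ?_) <;> apply sub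
        all_goals
          rintro w ⟨x, hx, h⟩ w' ⟨x', hx', h'⟩
          rw [hx] at hx'
          cases hx'
        exacts [hs.wave.fn h h', hs.wave.inj h h'])
    have hsub : s.N ⊆ N1 := fun x hx => hcl [] (by simp) (.inl (.inl hx))
    have hPQ : P' ⊆ Pop := hpop N1 hN1 (fun l hl x hx => hcl l hl (.inl (.inr hx))) P'
      ⟨hPN, Z', hZN, hPZ', hU⟩
    have sat : ∀ {u w}, s.F u w → (u ∈ N1 ↔ w ∈ N1) := fun {u w} e =>
      ⟨fun hu => hcl [u] (by simpa using hu) (.inr (.inl ⟨u, rfl, e⟩)),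
        fun hu => hcl [w] (by simpa using hu) (.inr (.inr ⟨w, rfl, e⟩))⟩
    obtain ⟨FU, hU⟩ := hU v hvP
    have f1 : Flow Γ (s.R ∪ Z') (joinF Γ s.F s.R FU) := join_flow hs.wave.toFlow hU.toFlow
    have f2 : Flow Γ (s.R ∪ Z') (reroute Γ s.F N1 Z' FU) :=
      reroute_flow hs.wave.toFlow hU hZN hs.hd hv sat
    obtain ⟨N', h1, h2, h3, h4⟩ := exists_sat (F := joinF Γ s.F s.R FU)
      (F' := reroute Γ s.F N1 Z' FU) hκ h0 (fun _ _ _ => f1.fn) (fun _ _ _ => f1.inj)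
      (fun _ _ _ => f2.fn) (fun _ _ _ => f2.inj) hN1
    obtain ⟨t, ht1, ht2, ht3, ht4, ht5⟩ :=
      good_step hs hv hU hPN hPQ hPZ' hZN hsub sat h1 h3 h4
    exact ⟨t, ht1, ht2, ht3 ▸ h2, ht4, ht5⟩
  have hPs : #(insert a P : Set V) < κ := by
    refine mk_insert_le.trans_lt (add_lt_of_lt hκ.aleph0_le ?_ (one_lt_aleph0.trans h0))
    exact (mk_le_mk_of_subset hP.1).trans_lt hN
  obtain ⟨N', h1, h2, h3, -⟩ := exists_sat (F := F) (F' := F) hκ h0 (fun _ _ _ => hw.fn)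
    (fun _ _ _ => hw.inj) (fun _ _ _ => hw.fn) (fun _ _ _ => hw.inj) hPs
  refine hY (hind_of_repair (s0 := ⟨Z, F, P, N'⟩) hκ rep haA ⟨hw, hd _ _, h3 _ _,
    hpop N hN hc P hP, fun x hx => h1 (.inr hx), hPZ, haZ, h1 (.inl rfl), hao⟩ h2)

end Closed

end Deletion

section Chains
variable {V : Type*} {Γ : Web V}

/-! ### Linking along chains of vertex sets -/

theorem lk_iUnion {ι : Type*} {T : ι → Set V} (hd : ∀ i j v, v ∈ T i → v ∈ T j → i = j)
    (h : ∀ i, Lk Γ (T i)) : Lk Γ (⋃ i, T i) := by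
  choose F h1 h2 h3 h4 using h
  refine ⟨fun u w => ∃ i, F i u w, ?_, ?_, ?_, ?_⟩
  · rintro u w ⟨i, e⟩
    obtain ⟨h, hu, hw⟩ := h1 i u w e
    exact ⟨h, Set.mem_iUnion.2 ⟨i, hu⟩, Set.mem_iUnion.2 ⟨i, hw⟩⟩
  · rintro u w w' ⟨i, e⟩ ⟨j, e'⟩
    obtain rfl := hd i j u (h1 _ _ _ e).2.1 (h1 _ _ _ e').2.1
    exact h2 i _ _ _ e e'
  · rintro u w w' ⟨i, e⟩ ⟨j, e'⟩
    obtain rfl := hd i j _ (h1 _ _ _ e).2.2 (h1 _ _ _ e').2.2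
    exact h3 i _ _ _ e e'
  · intro a ha haT
    obtain ⟨i, hi⟩ := Set.mem_iUnion.1 haT
    obtain ⟨b, hb, c⟩ := h4 i a ha hi
    exact ⟨b, hb, rtg_mono (fun u w e => ⟨i, e⟩) c⟩

/-- If each member of a well-ordered family of sets is linked outside the union of its
predecessors, then so is the whole union. -/
theorem lk_chain {I : Type*} [LinearOrder I] [WellFoundedLT I] {M : I → Set V} {Y : Set V}
    (h : ∀ i, Lk Γ (M i \ (Y ∪ ⋃ j : Set.Iio i, M j))) : Lk Γ ((⋃ i, M i) \ Y) := by
  have h' := lk_iUnion (T := fun i => M i \ (Y ∪ ⋃ j : Set.Iio i, M j)) ?_ h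
  · convert h' using 1
    ext v
    constructor
    · rintro ⟨hv, hY⟩
      obtain ⟨i, hi, hmin⟩ := (wellFounded_lt (α := I)).has_min {i | v ∈ M i}
        (Set.mem_iUnion.1 hv)
      refine Set.mem_iUnion.2 ⟨i, hi, ?_⟩
      rintro (h | h)
      · exact hY h
      · obtain ⟨⟨j, hj⟩, hv⟩ := Set.mem_iUnion.1 h
        exact hmin j hv hj
    · intro hv
      obtain ⟨i, hi, hn⟩ := Set.mem_iUnion.1 hv
      exact ⟨Set.mem_iUnion.2 ⟨i, hi⟩, fun h => hn (.inl h)⟩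
  · rintro i j v ⟨hi, hi'⟩ ⟨hj, hj'⟩
    rcases lt_trichotomy i j with h | h | h
    · exact (hj' (.inr (Set.mem_iUnion.2 ⟨⟨i, h⟩, hi⟩))).elim
    · exact h
    · exact (hi' (.inr (Set.mem_iUnion.2 ⟨⟨j, h⟩, hj⟩))).elim

theorem lk_chain_nat {M : ℕ → Set V} {Y : Set V} (h0 : M 0 = ∅) (hM : Monotone M)
    (h : ∀ n, Lk Γ (M (n + 1) \ (Y ∪ M n))) : Lk Γ ((⋃ i, M i) \ Y) := by
  have hU : (⋃ i, M (i + 1)) = ⋃ i, M i := by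
    apply Set.Subset.antisymm
    · exact Set.iUnion_subset fun i => Set.subset_iUnion M (i + 1)
    · exact Set.iUnion_subset fun i => (hM (Nat.le_succ i)).trans
        (Set.subset_iUnion (fun i => M (i + 1)) i)
  rw [← hU]
  refine lk_chain fun n => ?_
  have : (⋃ j : Set.Iio n, M (j + 1)) = M n := by
    apply Set.Subset.antisymm
    · exact Set.iUnion_subset fun i => hM (Nat.succ_le_of_lt i.2)
    · rcases n with _ | n
      · rw [h0]; exact Set.empty_subset _
      · exact Set.subset_iUnion (fun j : Set.Iio (n + 1) => M (j + 1)) ⟨n, Nat.lt_succ_self n⟩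
  rw [this]
  exact h n

theorem Lk.mono {S T : Set V} (h : Lk Γ S) (hST : S ⊆ T) (hA : ∀ a ∈ T, a ∈ Γ.A → a ∈ S) :
    Lk Γ T := by
  obtain ⟨F, h1, h2, h3, h4⟩ := h
  exact ⟨F, fun u w e => ⟨(h1 u w e).1, hST (h1 u w e).2.1, hST (h1 u w e).2.2⟩, h2, h3,
    fun a ha haT => h4 a ha (hA a haT ha)⟩

theorem lk_of_no_A {S : Set V} (h : ∀ a ∈ S, a ∉ Γ.A) : Lk Γ S :=
  ⟨fun _ _ => False, fun _ _ h => h.elim, fun _ _ _ h => h.elim, fun _ _ _ h => h.elim,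
    fun a ha haS => (h a haS ha).elim⟩

section Linking
universe u
open Cardinal
variable {V : Type u} {Γ : Web V}

/-- Whenever the web with `Y` deleted is unhindered, every set of at most `κ` vertices extends to
such a set that is closed under a given function and, with `Y` removed, linked within itself. -/
def LP (Γ : Web V) (κ : Cardinal.{u}) : Prop :=
  ∀ Y : Set V, ¬ Hind Γ Y → ∀ X : Set V, #X ≤ κ → ∀ g : List V → Set V, (∀ l, #(g l) ≤ κ) →
    ∃ M : Set V, X ⊆ M ∧ #M ≤ κ ∧ Cl g M ∧ Lk Γ (M \ Y)

/-! ### Countable sets -/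

theorem lp_aleph0 : LP Γ ℵ₀ := by
  intro Y hY X hX g hg
  -- a link for `a` avoiding `l`, whenever there is one that can be deleted
  have hS : ∀ (a : V) (l : List V), ∃ S : Set V, S.Finite ∧ (a ∈ Γ.A → a ∉ Y → a ∉ l →
      ¬ Hind Γ (Y ∪ {v | v ∈ l}) → a ∈ S ∧ (∀ v ∈ S, v ∉ Y) ∧ (∀ v ∈ S, v ∉ l) ∧ Lk Γ S ∧
      ¬ Hind Γ (Y ∪ {v | v ∈ l} ∪ S)) := by
    intro a l
    by_cases h : a ∈ Γ.A ∧ a ∉ Y ∧ a ∉ l ∧ ¬ Hind Γ (Y ∪ {v | v ∈ l})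
    · obtain ⟨h1, h2, h3, h4⟩ := h
      obtain ⟨S, s1, s2, s3, s4, s5⟩ := one_point h4 h1 (by rintro (h | h); exacts [h2 h, h3 h])
      exact ⟨S, s1, fun _ _ _ _ => ⟨s2, fun v hv h => s3 v hv (.inl h),
        fun v hv h => s3 v hv (.inr h), s4, s5⟩⟩
    · exact ⟨∅, Set.finite_empty, fun h1 h2 h3 h4 => (h ⟨h1, h2, h3, h4⟩).elim⟩
  choose S S1 S2 using hS
  let g' : List V → Set V := fun l => match l with
    | [] => ∅
    | a :: l => S a l
  obtain ⟨M, hXM, hM, hcl⟩ := exists_closed_le le_rfl (g := fun l => g l ∪ g' l) (by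
    intro l
    refine (mk_union_le _ _).trans (add_le_of_le le_rfl (hg l) ?_)
    rcases l with _ | ⟨a, l⟩
    · simp [g']
    · exact (mk_le_aleph0_iff).2 (S1 a l).countable) hX
  refine ⟨M, hXM, hM, fun l hl x hx => hcl l hl (.inl hx), ?_⟩
  have hSM : ∀ a l, a ∈ M → (∀ v ∈ l, v ∈ M) → S a l ⊆ M := by
    intro a l ha hl x hx
    refine hcl (a :: l) ?_ (.inr hx)
    intro v hv
    rcases List.mem_cons.1 hv with rfl | hv
    exacts [ha, hl v hv]
  rcases M.eq_empty_or_nonempty with rfl | hne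
  · exact lk_of_no_A fun a ha => ha.1.elim
  obtain ⟨e, he⟩ := (Set.countable_coe_iff.1 (mk_le_aleph0_iff.1 hM)).exists_eq_range hne
  have heM : ∀ n, e n ∈ M := fun n => he ▸ Set.mem_range_self n
  have hnx : ∀ (l : List V) (a : V), ∃ l' : List V,
      ((a ∈ Γ.A ∧ a ∉ Y ∧ a ∉ l) → ∀ v, v ∈ l' ↔ v ∈ l ∨ v ∈ S a l) ∧
      (¬ (a ∈ Γ.A ∧ a ∉ Y ∧ a ∉ l) → l' = l) := by
    intro l a
    by_cases hc : a ∈ Γ.A ∧ a ∉ Y ∧ a ∉ l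
    · refine ⟨l ++ (S1 a l).toFinset.toList, fun _ v => ?_, fun h => (h hc).elim⟩
      rw [List.mem_append, Finset.mem_toList, Set.Finite.mem_toFinset]
    · exact ⟨l, fun h => (hc h).elim, fun _ => rfl⟩
  choose nxt nx1 nx2 using hnx
  obtain ⟨L, L0, Ls⟩ : ∃ L : ℕ → List V, L 0 = [] ∧ ∀ n, L (n + 1) = nxt (L n) (e n) :=
    ⟨fun n => Nat.rec (motive := fun _ => List V) [] (fun n l => nxt l (e n)) n, rfl, fun _ => rfl⟩
  have inv : ∀ n, (∀ v ∈ L n, v ∈ M) ∧ ¬ Hind Γ (Y ∪ {v | v ∈ L n}) := by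
    intro n
    induction n with
    | zero => simpa [L0] using hY
    | succ n ih =>
      rw [Ls]
      by_cases hc : e n ∈ Γ.A ∧ e n ∉ Y ∧ e n ∉ L n
      · obtain ⟨s1, s2, s3, s4, s5⟩ := S2 (e n) (L n) hc.1 hc.2.1 hc.2.2 ih.2
        have hm := nx1 _ _ hc
        constructor
        · intro v hv
          rcases (hm v).1 hv with hv | hv
          exacts [ih.1 v hv, hSM _ _ (heM n) ih.1 hv]
        · convert s5 using 2
          ext v
          simp only [Set.mem_union, Set.mem_ofPred_eq, hm]
          tauto
      · rw [nx2 _ _ hc]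
        exact ih
  have hsub : ∀ n, {v | v ∈ L n} ⊆ {v | v ∈ L (n + 1)} := by
    intro n v hv
    rw [Set.mem_ofPred_eq, Ls]
    by_cases hc : e n ∈ Γ.A ∧ e n ∉ Y ∧ e n ∉ L n
    · exact (nx1 _ _ hc v).2 (.inl hv)
    · rw [nx2 _ _ hc]
      exact hv
  have hlk : Lk Γ ((⋃ n, {v | v ∈ L n}) \ Y) := by
    refine lk_chain_nat (by simp [L0]) (monotone_nat_of_le_succ hsub) fun n => ?_
    by_cases hc : e n ∈ Γ.A ∧ e n ∉ Y ∧ e n ∉ L n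
    · obtain ⟨s1, s2, s3, s4, s5⟩ := S2 (e n) (L n) hc.1 hc.2.1 hc.2.2 (inv n).2
      convert s4 using 1
      ext v
      have h2 := s2 v
      have h3 := s3 v
      simp only [Ls, nx1 _ _ hc, Set.mem_sdiff, Set.mem_union, Set.mem_ofPred_eq]
      tauto
    · refine lk_of_no_A ?_
      rintro a ⟨h1, h2⟩
      rw [Set.mem_ofPred_eq, Ls, nx2 _ _ hc] at h1
      exact (h2 (.inr h1)).elim
  refine hlk.mono ?_ ?_
  · rintro v ⟨hv, hn⟩
    obtain ⟨n, hv⟩ := Set.mem_iUnion.1 hv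
    exact ⟨(inv n).1 v hv, hn⟩
  · rintro a ⟨haM, haY⟩ haA
    refine ⟨?_, haY⟩
    rw [he] at haM
    obtain ⟨n, rfl⟩ := haM
    by_cases hc : e n ∈ L n
    · exact Set.mem_iUnion.2 ⟨n, hc⟩
    · refine Set.mem_iUnion.2 ⟨n + 1, ?_⟩
      have s1 := (S2 (e n) (L n) haA haY hc (inv n).2).1
      rw [Set.mem_ofPred_eq, Ls]
      exact (nx1 _ _ ⟨haA, haY, hc⟩ _).2 (.inr s1)

/-! ### Regular uncountable cardinals -/

/-- The set provided by `LP` can be chosen such that its deletion leaves an unhindered web. -/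
theorem LP.good {μ : Cardinal.{u}} (h : LP Γ μ) (hμ : ℵ₀ ≤ μ) {Y : Set V} (hY : ¬ Hind Γ Y)
    {X : Set V} (hX : #X ≤ μ) : ∃ M : Set V, X ⊆ M ∧ #M ≤ μ ∧ Lk Γ (M \ Y) ∧ ¬ Hind Γ (Y ∪ M) := by
  obtain ⟨G, hG, hN⟩ := closed_good (isRegular_succ hμ) (hμ.trans_lt (Order.lt_succ μ)) hY
  obtain ⟨M, h1, h2, h3, h4⟩ := h Y hY X hX G fun l => Order.lt_succ_iff.1 (hG l)
  exact ⟨M, h1, h2, h4, hN M (Order.lt_succ_iff.2 h2) h3⟩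

/-- The linked sets of size less than `κ` can be chosen closed even under a function whose values
have no common bound below `κ`: they are unions of countable chains. -/
theorem small_link {κ : Cardinal.{u}} (hκ : κ.IsRegular) (h0 : ℵ₀ < κ)
    (ih : ∀ μ < κ, ℵ₀ ≤ μ → LP Γ μ) {Y X : Set V} (hY : ¬ Hind Γ Y) (hX : #X < κ)
    {G : List V → Set V} (hG : ∀ l, #(G l) < κ) :
    ∃ M : Set V, X ⊆ M ∧ #M < κ ∧ Cl G M ∧ Lk Γ (M \ Y) := by
  have step : ∀ N : {N : Set V // #N < κ ∧ ¬ Hind Γ (Y ∪ N)},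
      ∃ N' : {N : Set V // #N < κ ∧ ¬ Hind Γ (Y ∪ N)}, X ⊆ N'.1 ∧ clStep G N.1 ⊆ N'.1 ∧
        Lk Γ (N'.1 \ (Y ∪ N.1)) := by
    rintro ⟨N, hN, hg⟩
    have hX' : #(X ∪ clStep G N : Set V) < κ :=
      mk_union_lt hκ.aleph0_le hX (mk_clStep_lt hκ h0 hG hN)
    have hμ := max_lt h0 hX'
    obtain ⟨M, h1, h2, h3, h4⟩ := (ih _ hμ (le_max_left _ _)).good (le_max_left _ _) hg
      (le_max_right _ _)
    have hNM : N ⊆ M := fun x hx => h1 (.inr (.inl hx))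
    refine ⟨⟨M, h2.trans_lt hμ, ?_⟩, fun x hx => h1 (.inl hx), fun x hx => h1 (.inr hx), h3⟩
    rwa [Set.union_assoc, Set.union_eq_self_of_subset_left hNM] at h4
  choose nx n1 n2 n3 using step
  let M : ℕ → {N : Set V // #N < κ ∧ ¬ Hind Γ (Y ∪ N)} := fun n =>
    Nat.rec ⟨∅, by simpa using aleph0_pos.trans h0, by simpa using hY⟩ (fun _ N => nx N) n
  have Ms : ∀ n, M (n + 1) = nx (M n) := fun n => rfl
  have hM : Monotone fun n => (M n).1 := monotone_nat_of_le_succ fun n x hx =>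
    n2 (M n) (.inl hx)
  refine ⟨⋃ n, (M n).1, ?_, mk_iUnion_nat_lt hκ h0 fun n => (M n).2.1, ?_,
    lk_chain_nat rfl hM fun n => n3 (M n)⟩
  · exact (n1 (M 0)).trans (Set.subset_iUnion (fun n => (M n).1) 1)
  · intro l hl x hx
    obtain ⟨n, hn⟩ := list_mem_chain hM hl
    refine Set.mem_iUnion.2 ⟨n + 1, n2 (M n) (.inr (Set.mem_iUnion.2
      ⟨l.attach.map fun v => ⟨v.1, hn _ v.2⟩, ?_⟩))⟩
    simpa [List.map_map, Function.comp_def] using hx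

end Linking

end Chains

section RegularCase
variable {V : Type*} {Γ : Web V}

section Linking2
universe u
open Cardinal
variable {V : Type u} {Γ : Web V}

theorem exists_enum {κ : Cardinal.{u}} {S : Set V} (hS : #S ≤ κ) :
    ∃ e : κ.ord.ToType → Set V, (∀ i, (e i).Subsingleton) ∧ (⋃ i, e i) = S := by
  have h : #S ≤ #(κ.ord.ToType) := by rwa [mk_ord_toType]
  obtain ⟨φ⟩ := Cardinal.le_def _ _ |>.1 h
  refine ⟨fun i => {v | ∃ hv : v ∈ S, φ ⟨v, hv⟩ = i}, ?_, ?_⟩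
  · rintro i v ⟨hv, rfl⟩ w ⟨hw, h⟩
    exact congrArg Subtype.val (φ.injective h.symm)
  · ext v
    simp

theorem cl_iUnion {ι : Type*} [LinearOrder ι] [Nonempty ι] {M : ι → Set V} (hM : Monotone M)
    {G : List V → Set V} (h : ∀ i, Cl G (M i)) : Cl G (⋃ i, M i) := by
  intro l hl
  obtain ⟨i, hi⟩ := list_mem_chain hM hl
  exact (h i l hi).trans (Set.subset_iUnion M i)

/-- The union of a chain `M i` of length `κ` is linked if each `M i` is linked outside the union of
its predecessors, which is deletable as it is closed in the sense of `closed_good`. The set `X` and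
the values of `g` are enumerated in type `κ` and caught up with along the chain. -/
theorem lp_regular {κ : Cardinal.{u}} (hκ : κ.IsRegular) (h0 : ℵ₀ < κ)
    (ih : ∀ μ < κ, ℵ₀ ≤ μ → LP Γ μ) : LP Γ κ := by
  intro Y hY X hX g hg
  obtain ⟨G, hG, hGN⟩ := closed_good hκ h0 hY
  let I := κ.ord.ToType
  have : NoMaxOrder I := noMaxOrder hκ.aleph0_le
  have : Nonempty I := by
    rw [← mk_ne_zero_iff, mk_ord_toType]
    exact hκ.pos.ne'
  have hsub : ∀ T : Set V, T.Subsingleton → #T < κ := fun T hT =>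
    (mk_le_one_iff_set_subsingleton.2 hT).trans_lt (one_lt_aleph0.trans h0)
  obtain ⟨eX, eX1, eX2⟩ := exists_enum hX
  choose eg eg1 eg2 using fun l => exists_enum (hg l)
  let U : I → (I → Set V) → Set V := fun i f => ⋃ j : Set.Iio i, f j
  let P : I → (I → Set V) → Set V → Prop := fun i f M =>
    #M < κ ∧ Cl G M ∧ U i f ⊆ M ∧ eX i ⊆ M ∧
    (∀ l : List V, (∀ v ∈ l, v ∈ U i f) → ∀ j < i, eg l j ⊆ M) ∧ Lk Γ (M \ (Y ∪ U i f))
  obtain ⟨M, hM⟩ : ∃ M, ∀ i, P i M (M i) := by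
    refine transfinite P ?_ ?_
    · intro i f f' M h hP
      have : U i f = U i f' := Set.iUnion_congr fun j => h j j.2
      simpa only [P, this] using hP
    · intro i f ih'
      have hmono : Monotone fun j : Set.Iio i => f j := by
        intro j k hjk
        rcases hjk.eq_or_lt with rfl | h
        · exact subset_rfl
        · exact (Set.subset_iUnion (fun j : Set.Iio k.1 => f j) ⟨j.1, h⟩).trans (ih' k k.2).2.2.1
      have hUs : #(U i f) < κ := mk_iUnion_lt hκ (mk_Iio_lt_ord i) fun j => (ih' j j.2).1
      have hgood : ¬ Hind Γ (Y ∪ U i f) := by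
        rcases isEmpty_or_nonempty (Set.Iio i) with he | he
        · have : U i f = ∅ := Set.iUnion_of_empty _
          rwa [this, Set.union_empty]
        · exact hGN _ hUs (cl_iUnion hmono fun j => (ih' j j.2).2.1)
      obtain ⟨M, h1, h2, h3, h4⟩ := small_link hκ h0 ih hgood
        (X := U i f ∪ eX i ∪ ⋃ l : List (U i f), ⋃ j : Set.Iio i, eg (l.map Subtype.val) j) (by
          refine mk_union_lt hκ.aleph0_le (mk_union_lt hκ.aleph0_le hUs (hsub _ (eX1 i)))
            (mk_iUnion_lt hκ ?_ fun l => mk_iUnion_lt hκ (mk_Iio_lt_ord i) fun j =>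
              hsub _ (eg1 _ _))
          exact (mk_list_le_max _).trans_lt (max_lt h0 hUs)) hG
      refine ⟨M, h2, h3, fun x hx => h1 (.inl (.inl hx)), fun x hx => h1 (.inl (.inr hx)), ?_, h4⟩
      intro l hl j hj x hx
      refine h1 (.inr (Set.mem_iUnion.2 ⟨l.attach.map fun v => ⟨v.1, hl _ v.2⟩,
        Set.mem_iUnion.2 ⟨⟨j, hj⟩, ?_⟩⟩))
      simpa [List.map_map, Function.comp_def] using hx
  have hmono : Monotone M := by
    intro j k hjk
    rcases hjk.eq_or_lt with rfl | h
    · exact subset_rfl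
    · exact (Set.subset_iUnion (fun j : Set.Iio k => M j) ⟨j, h⟩).trans (hM k).2.2.1
  refine ⟨⋃ i, M i, ?_, ?_, ?_, lk_chain fun i => (hM i).2.2.2.2.2⟩
  · rw [← eX2]
    exact Set.iUnion_mono fun i => (hM i).2.2.2.1
  · refine mk_iUnion_le_sum_mk.trans ((sum_le_sum _ (fun _ => κ) fun i => (hM i).1.le).trans ?_)
    rw [sum_const', mk_ord_toType, mul_eq_self hκ.aleph0_le]
  · intro l hl x hx
    obtain ⟨j, hj⟩ := list_mem_chain hmono hl
    rw [← eg2 l] at hx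
    obtain ⟨k, hk⟩ := Set.mem_iUnion.1 hx
    obtain ⟨i, hi⟩ := exists_gt (max j k)
    refine Set.mem_iUnion.2 ⟨i, (hM i).2.2.2.2.1 l ?_ k ((le_max_right _ _).trans_lt hi) hk⟩
    exact fun v hv => Set.mem_iUnion.2 ⟨⟨j, (le_max_left _ _).trans_lt hi⟩, hj v hv⟩

end Linking2

end RegularCase

section SingularCase
variable {V : Type*} {Γ : Web V}

/-! ### Singular cardinals -/

section Singular
universe u
open Cardinal Ordinal
variable {V : Type u} {Γ : Web V}

/-- A singular cardinal is approached by an increasing family of smaller cardinals, each at least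
the size of the index set. -/
theorem exists_ladder {κ : Cardinal.{u}} (hκ : ℵ₀ < κ) (hs : ¬ κ.IsRegular) :
    ∃ (I : Set κ.ord.ToType) (c : I → Cardinal.{u}), Nonempty I ∧ Monotone c ∧
      (∀ i, ℵ₀ ≤ c i) ∧ (∀ i, #I ≤ c i) ∧ (∀ i, c i < κ) ∧ ∀ μ < κ, ∃ i, μ < c i := by
  have hcof : κ.ord.cof < κ := by
    by_contra h
    exact hs ⟨hκ.le, not_lt.1 h⟩
  obtain ⟨I, hI, hc⟩ := Order.exists_cof_eq κ.ord.ToType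
  rw [cof_toType] at hc
  have key : ∀ μ < κ, ∃ i : I, μ < max (max ℵ₀ #I) (ToType.mk.symm i.1).1.card := by
    intro μ hμ
    rcases lt_or_ge μ ℵ₀ with h | h
    · obtain ⟨i, hi, -⟩ := hI (ToType.mk ⟨0, (ord_pos.2 (aleph0_pos.trans hκ))⟩)
      exact ⟨⟨i, hi⟩, h.trans_le ((le_max_left _ _).trans (le_max_left _ _))⟩
    · have hs' : Order.succ μ < κ := by
        refine lt_of_le_of_ne (Order.succ_le_of_lt hμ) ?_
        rintro rfl
        exact hs (isRegular_succ h)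
      obtain ⟨i, hi, hle⟩ := hI (ToType.mk ⟨(Order.succ μ).ord, ord_lt_ord.2 hs'⟩)
      refine ⟨⟨i, hi⟩, lt_of_lt_of_le (Order.lt_succ μ) (le_trans ?_ (le_max_right _ _))⟩
      have h2 : (Order.succ μ).ord ≤ (ToType.mk.symm i).1 := by
        have := ToType.mk.symm.monotone hle
        rw [OrderIso.symm_apply_apply] at this
        exact this
      simpa using card_le_card h2
  refine ⟨I, fun i => max (max ℵ₀ #I) (ToType.mk.symm i.1).1.card, ?_, ?_, ?_, ?_, ?_, key⟩
  · obtain ⟨i, -⟩ := key 0 (aleph0_pos.trans hκ)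
    exact ⟨i⟩
  · intro i j hij
    exact max_le_max le_rfl (card_le_card (ToType.mk.symm.monotone hij))
  · exact fun i => (le_max_left _ _).trans (le_max_left _ _)
  · exact fun i => (le_max_right _ _).trans (le_max_left _ _)
  · exact fun i => max_lt (max_lt hκ (hc ▸ hcof)) (lt_ord.1 (ToType.mk.symm i.1).2)

/-- A well-ordering of `S` in its initial order type filters `S` by subsets `Q μ` of size at
most `μ`. -/
theorem exists_rank (S : Set V) : ∃ Q : Cardinal.{u} → Set V, (∀ μ, #(Q μ) ≤ μ) ∧ Monotone Q ∧
    (∀ μ, Q μ ⊆ S) ∧ ∀ v ∈ S, ∃ ν < #S, ∀ ρ, ν < ρ → v ∈ Q ρ := by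
  obtain ⟨φ⟩ := Cardinal.eq.1 (mk_ord_toType #S).symm
  let r : S → Ordinal.{u} := fun v => (ToType.mk.symm (φ v)).1
  have hr : Function.Injective r := fun v w h =>
    φ.injective (ToType.mk.symm.injective (Subtype.ext h))
  refine ⟨fun μ => {v | ∃ hv : v ∈ S, (r ⟨v, hv⟩).card < μ}, ?_, ?_, ?_, ?_⟩
  · intro μ
    let f : {v | ∃ hv : v ∈ S, (r ⟨v, hv⟩).card < μ} → Set.Iio μ.ord := fun v =>
      ⟨r ⟨v.1, v.2.1⟩, lt_ord.2 v.2.2⟩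
    have hf : Function.Injective f := by
      intro v w h
      have h' : r ⟨v.1, v.2.1⟩ = r ⟨w.1, w.2.1⟩ := 
        congrArg (fun x : Set.Iio μ.ord => x.1) h
      have := hr h'
      exact Subtype.ext (congrArg (fun x : S => x.1) this)
    have := lift_mk_le_lift_mk_of_injective hf
    rw [Cardinal.mk_Iio_ordinal, card_ord] at this
    simpa using this
  · rintro μ ν h v ⟨hv, hlt⟩
    exact ⟨hv, hlt.trans_le h⟩
  · rintro μ v ⟨hv, -⟩
    exact hv
  · intro v hv
    exact ⟨(r ⟨v, hv⟩).card, lt_ord.1 (ToType.mk.symm (φ ⟨v, hv⟩)).2, fun ρ h => ⟨hv, h⟩⟩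

theorem mk_iUnion_le_of_le {ι : Type u} {μ : Cardinal.{u}} (hμ : ℵ₀ ≤ μ) (hι : #ι ≤ μ)
    {S : ι → Set V} (hS : ∀ i, #(S i) ≤ μ) : #(⋃ i, S i) ≤ μ := by
  refine mk_iUnion_le_sum_mk.trans ((sum_le_sum _ (fun _ => μ) hS).trans ?_)
  rw [sum_const']
  exact (mul_le_mul_left hι μ).trans (mul_eq_self hμ).le

/-- The chain `M i` is indexed by a cofinal set `I`, with `#(M i) ≤ c i` for the cardinals `c i` of
`exists_ladder`. The union of the stages before `i` has size at most `d i`, so it must be closed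
under the function `G i` of `closed_good` for the successor of `d i`. This is fixed in advance for
all `i`, and stage `j` is closed under the initial parts of size `c j` of all `G i`; at stage `i`
these exhaust `G i`, the `c j` for `j < i` having supremum `d i`. -/
theorem lp_singular {κ : Cardinal.{u}} (h0 : ℵ₀ < κ) (hs : ¬ κ.IsRegular)
    (ih : ∀ μ < κ, ℵ₀ ≤ μ → LP Γ μ) : LP Γ κ := by
  intro Y hY X hX g hg
  obtain ⟨I, c, hne, cmono, c0, cI, clt, ccof⟩ := exists_ladder h0 hs
  choose Q Q1 Q2 Q3 Q4 using fun S : Set V => exists_rank S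
  let d : I → Cardinal.{u} := fun i => max ℵ₀ (⨆ j : Set.Iio i, c j)
  have hG : ∀ i, ∃ G : List V → Set V, (∀ l, #(G l) ≤ d i) ∧
      ∀ N : Set V, #N ≤ d i → Cl G N → ¬ Hind Γ (Y ∪ N) := by
    intro i
    have h : ℵ₀ ≤ d i := le_max_left _ _
    obtain ⟨G, h1, h2⟩ := closed_good (isRegular_succ h) (h.trans_lt (Order.lt_succ _)) hY
    exact ⟨G, fun l => Order.lt_succ_iff.1 (h1 l), fun N hN => h2 N (Order.lt_succ_iff.2 hN)⟩
  choose G G1 G2 using hG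
  -- the part of all closure requirements visible at stage `j`
  let h : I → List V → Set V := fun j l => (⋃ i, Q (G i l) (c j)) ∪ Q (g l) (c j)
  have hh : ∀ j l, #(h j l) ≤ c j := fun j l =>
    (mk_union_le _ _).trans (add_le_of_le (c0 j)
      (mk_iUnion_le_of_le (c0 j) (cI j) fun i => Q1 _ _) (Q1 _ _))
  have hhm : ∀ l, Monotone fun j => h j l := fun l j k hjk =>
    Set.union_subset_union (Set.iUnion_mono fun i => Q2 _ (cmono hjk)) (Q2 _ (cmono hjk))
  let U : I → (I → Set V) → Set V := fun i f => ⋃ j : Set.Iio i, f j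
  let P : I → (I → Set V) → Set V → Prop := fun i f M =>
    #M ≤ c i ∧ Cl (h i) M ∧ U i f ⊆ M ∧ Q X (c i) ⊆ M ∧ Lk Γ (M \ (Y ∪ U i f))
  obtain ⟨M, hM⟩ : ∃ M, ∀ i, P i M (M i) := by
    refine transfinite P ?_ ?_
    · intro i f f' M h hP
      have : U i f = U i f' := Set.iUnion_congr fun j => h j j.2
      simpa only [P, this] using hP
    · intro i f ih'
      have hmono : Monotone fun j : Set.Iio i => f j := by
        intro j k hjk
        rcases hjk.eq_or_lt with rfl | h
        · exact subset_rfl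
        · exact (Set.subset_iUnion (fun j : Set.Iio k.1 => f j) ⟨j.1, h⟩).trans (ih' k k.2).2.2.1
      have hIio : #(Set.Iio i) ≤ #I := mk_set_le _
      have hUs : #(U i f) ≤ c i := mk_iUnion_le_of_le (c0 i) (hIio.trans (cI i)) fun j =>
        (ih' j j.2).1.trans (cmono j.2.le)
      have hgood : ¬ Hind Γ (Y ∪ U i f) := by
        rcases isEmpty_or_nonempty (Set.Iio i) with he | he
        · have : U i f = ∅ := Set.iUnion_of_empty _
          rwa [this, Set.union_empty]
        · have hcd : ∀ j : Set.Iio i, c j ≤ d i := fun j =>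
            (le_ciSup (bddAbove_of_small (s := Set.range fun j : Set.Iio i => c j)) j).trans
              (le_max_right _ _)
          obtain ⟨j0⟩ := he
          have hd : d i = ⨆ j : Set.Iio i, c j := max_eq_right ((c0 j0).trans
            (le_ciSup (bddAbove_of_small (s := Set.range fun j : Set.Iio i => c j)) j0))
          have : Nonempty (Set.Iio i) := ⟨j0⟩
          refine G2 i _ (mk_iUnion_le_of_le (le_max_left _ _)
            (hIio.trans ((cI j0).trans (hcd j0))) fun j => (ih' j j.2).1.trans (hcd j)) ?_
          intro l hl x hx
          obtain ⟨j, hj⟩ := list_mem_chain hmono hl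
          obtain ⟨ν, hν, hQ⟩ := Q4 _ x hx
          have hν' : ν < ⨆ j : Set.Iio i, c j := hd ▸ hν.trans_le (G1 i l)
          obtain ⟨k, hk⟩ := exists_lt_of_lt_ciSup hν'
          have hx' : x ∈ h (max j k : Set.Iio i) l :=
            hhm l (le_max_right j k : k ≤ max j k)
              (.inl (Set.mem_iUnion.2 ⟨i, hQ _ hk⟩))
          refine Set.mem_iUnion.2 ⟨max j k, (ih' _ (max j k).2).2.1 l ?_ hx'⟩
          exact fun v hv => hmono (le_max_left j k) (hj v hv)
      obtain ⟨M, h1, h2, h3, h4⟩ := ih (c i) (clt i) (c0 i) _ hgood (U i f ∪ Q X (c i))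
        ((mk_union_le _ _).trans (add_le_of_le (c0 i) hUs (Q1 _ _))) (h i) (hh i)
      exact ⟨M, h2, h3, fun x hx => h1 (.inl hx), fun x hx => h1 (.inr hx), h4⟩
  have hmono : Monotone M := by
    intro j k hjk
    rcases hjk.eq_or_lt with rfl | h
    · exact subset_rfl
    · exact (Set.subset_iUnion (fun j : Set.Iio k => M j) ⟨j, h⟩).trans (hM k).2.2.1
  refine ⟨⋃ i, M i, ?_, ?_, ?_, lk_chain fun i => (hM i).2.2.2.2⟩
  · intro v hv
    obtain ⟨ν, hν, hQ⟩ := Q4 X v hv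
    obtain ⟨i, hi⟩ := ccof ν (hν.trans_le hX)
    exact Set.mem_iUnion.2 ⟨i, (hM i).2.2.2.1 (hQ _ hi)⟩
  · obtain ⟨i⟩ := hne
    exact mk_iUnion_le_of_le h0.le ((cI i).trans (clt i).le) fun i => (hM i).1.trans (clt i).le
  · intro l hl x hx
    obtain ⟨j, hj⟩ := list_mem_chain hmono hl
    obtain ⟨ν, hν, hQ⟩ := Q4 _ x hx
    obtain ⟨k, hk⟩ := ccof ν (hν.trans_le (hg l))
    refine Set.mem_iUnion.2 ⟨max j k, (hM _).2.1 l (fun v hv => hmono (le_max_left j k) (hj v hv))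
      (hhm l (le_max_right j k) (.inr (hQ _ hk)))⟩

theorem lp_all (κ : Cardinal.{u}) (hκ : ℵ₀ ≤ κ) : LP Γ κ := by
  induction κ using WellFoundedLT.induction with
  | ind κ ih =>
    rcases hκ.eq_or_lt with rfl | h
    · exact lp_aleph0
    · by_cases hr : κ.IsRegular
      · exact lp_regular hr h fun μ hμ h' => ih μ hμ h'
      · exact lp_singular h hr fun μ hμ h' => ih μ hμ h'

theorem lk_univ (h : ¬ Hind Γ ∅) : Lk Γ Set.univ := by
  obtain ⟨M, h1, -, -, h2⟩ := lp_all (max ℵ₀ #V) (le_max_left _ _) ∅ h Set.univ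
    (by rw [mk_univ]; exact le_max_right _ _) (fun _ => ∅) (fun _ => by simp)
  rwa [Set.sdiff_empty, Set.eq_univ_of_univ_subset h1] at h2

end Singular

end SingularCase

section Translation
variable {V : Type*} {Γ : Web V}

/-! ### From flows to warps -/

theorem path_list {F : V → V → Prop} (fn : ∀ u w w', F u w → F u w' → w = w') {a b : V}
    (hb : ∀ x, ¬ F b x) (c : ReflTransGen F a b) :
    ∃ p : List V, p.head? = some a ∧ p.getLast? = some b ∧ p.Nodup ∧ p.IsChain F ∧
      ∀ v ∈ p, ReflTransGen F a v ∧ ReflTransGen F v b := by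
  induction c using ReflTransGen.head_induction_on with
  | refl => exact ⟨[b], by simp, by simp, by simp, by simp, by simpa using ReflTransGen.refl⟩
  | @head a q e c ih =>
    obtain ⟨p, h1, h2, h3, h4, h5⟩ := ih
    refine ⟨a :: p, rfl, ?_, ?_, ?_, ?_⟩
    · rw [List.getLast?_cons, h2]; rfl
    · refine List.nodup_cons.2 ⟨fun h => ?_, h3⟩
      exact no_cycle fn hb (c.head e) q e (h5 a h).1
    · refine List.isChain_cons.2 ⟨?_, h4⟩
      intro y hy
      rw [h1] at hy
      obtain rfl := Option.some.inj hy
      exact e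
    · intro v hv
      rcases List.mem_cons.1 hv with rfl | hv
      · exact ⟨.refl, c.head e⟩
      · exact ⟨(h5 v hv).1.head e, (h5 v hv).2⟩

theorem rtg_eq_of_no_in {F : V → V → Prop} {u w : V} (h : ∀ x, ¬ F x w)
    (c : ReflTransGen F u w) : u = w := by
  rcases c.cases_tail with h' | ⟨x, _, hx⟩
  · exact h'.symm
  · exact absurd hx (h x)

theorem source_unique {F : V → V → Prop} (inj : ∀ u u' w, F u w → F u' w → u = u') {a a' b : V}
    (ha : ∀ x, ¬ F x a) (ha' : ∀ x, ¬ F x a') (c : ReflTransGen F a b)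
    (c' : ReflTransGen F a' b) : a = a' := by
  induction c with
  | refl => exact (rtg_eq_of_no_in ha c').symm
  | tail _ e ih =>
    rcases c'.cases_tail with rfl | ⟨x, hx, e'⟩
    · exact (ha' _ e).elim
    · obtain rfl := inj _ _ _ e e'
      exact ih hx

theorem sink_unique {F : V → V → Prop} (fn : ∀ u w w', F u w → F u w' → w = w') {v t t' : V}
    (ht : ∀ x, ¬ F t x) (ht' : ∀ x, ¬ F t' x) (c : ReflTransGen F v t)
    (c' : ReflTransGen F v t') : t = t' := by
  rcases ReflTransGen.total_of_right_unique (fun u w w' e e' => fn u w w' e e') c c' with h | h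
  · exact rtg_eq_of_no_out ht h
  · exact (rtg_eq_of_no_out ht' h).symm

/-- The paths from `A` to covered vertices without out-edges, as lists indexed by their last
vertex. -/
theorem exists_lists {F : V → V → Prop} (hF : ∀ u w, F u w → Γ.Adj u w)
    (fn : ∀ u w w', F u w → F u w' → w = w') {T : Set V}
    (hT : ∀ t ∈ T, (∀ x, ¬ F t x) ∧ Cov Γ F t) :
    ∃ p : V → List V, ∀ t ∈ T, IsFinPath Γ.Adj (p t) ∧ (p t).getLast? = some t ∧
      ∃ a ∈ Γ.A, (p t).head? = some a ∧ ∀ v ∈ p t, ReflTransGen F a v ∧ ReflTransGen F v t := by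
  have : ∀ t, ∃ p : List V, t ∈ T → IsFinPath Γ.Adj p ∧ p.getLast? = some t ∧
      ∃ a ∈ Γ.A, p.head? = some a ∧ ∀ v ∈ p, ReflTransGen F a v ∧ ReflTransGen F v t := by
    intro t
    by_cases ht : t ∈ T
    · obtain ⟨hn, a, ha, c⟩ := hT t ht
      obtain ⟨p, h1, h2, h3, h4, h5⟩ := path_list fn hn c
      refine ⟨p, fun _ => ⟨⟨?_, h3, h4.imp hF⟩, h2, a, ha, h1, h5⟩⟩
      rintro rfl
      simp at h1
    · exact ⟨[], fun h => (ht h).elim⟩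
  choose p hp using this
  exact ⟨p, hp⟩

theorem cross_bd {R : Set V} : ∀ {p : List V} {a b : V}, p.IsChain Γ.Adj → p.head? = some a →
    a ∈ R → p.getLast? = some b → b ∉ R → ∃ t ∈ bd Γ R, t ∈ p
  | [], _, _, _, h, _, _, _ => by simp at h
  | [x], a, b, _, h, ha, h', hb => by
    obtain rfl : x = a := by simpa using h
    obtain rfl : x = b := by simpa using h'
    exact (hb ha).elim
  | x :: y :: l, a, b, hc, h, ha, h', hb => by
    obtain rfl : x = a := by simpa using h
    rw [List.isChain_cons_cons] at hc
    by_cases hy : y ∈ R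
    · obtain ⟨t, ht, htl⟩ := cross_bd (p := y :: l) (a := y) (b := b) hc.2 rfl hy
        (by rw [List.getLast?_cons_cons] at h'; exact h') hb
      exact ⟨t, ht, List.mem_cons_of_mem _ htl⟩
    · exact ⟨y, ⟨hy, x, ha, hc.1⟩, by simp⟩

theorem hindered_of_hind (h : Hind Γ ∅) : Γ.Hindered := by
  obtain ⟨R, F, a, w, haA, haR, ha⟩ := h
  have fn : ∀ u w w', F u w → F u w' → w = w' := fun _ _ _ => w.fn
  let T : Set V := bd Γ R ∪ (Γ.A \ R)
  have hTR : ∀ t ∈ T, t ∉ R := by rintro t (ht | ht); exacts [ht.1, ht.2]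
  have hT : ∀ t ∈ T, (∀ x, ¬ F t x) ∧ Cov Γ F t := by
    intro t ht
    refine ⟨fun x e => hTR t ht (w.mem e), ?_⟩
    rcases ht with ht | ht
    · exact w.cov ht (Set.notMem_empty t)
    · exact Cov.of_A ht.1
  obtain ⟨p, hp⟩ := exists_lists (fun u v e => w.adj e) fn hT
  refine ⟨{P | ∃ t ∈ T, P = .fin (p t)}, ⟨⟨⟨?_, ?_⟩, ?_, ?_⟩, ?_⟩⟩
  · rintro P ⟨t, ht, rfl⟩
    exact (hp t ht).1
  · rintro P ⟨t, ht, rfl⟩ P' ⟨t', ht', rfl⟩ hne v hv hv'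
    obtain ⟨-, -, b, -, -, h1⟩ := hp t ht
    obtain ⟨-, -, b', -, -, h1'⟩ := hp t' ht'
    exact hne (by rw [sink_unique fn (hT t ht).1 (hT t' ht').1 (h1 v hv).2 (h1' v hv').2])
  · rintro v ⟨P, ⟨t, ht, rfl⟩, hv⟩
    obtain ⟨-, -, b, hb, h1, -⟩ := hp t ht
    obtain rfl : b = v := Option.some.inj (h1.symm.trans hv)
    exact hb
  · rintro q ⟨⟨-, -, hc⟩, ⟨x, hx, hqx⟩, y, hy, hqy⟩
    have hter : ∀ t ∈ T, t ∈ warpTer {P | ∃ t ∈ T, P = GPath.fin (p t)} := fun t ht =>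
      ⟨_, ⟨t, ht, rfl⟩, (hp t ht).2.1⟩
    by_cases hxR : x ∈ R
    · obtain ⟨t, ht, htq⟩ := cross_bd hc hqx hxR hqy fun h => w.dB h hy
      exact ⟨t, hter t (.inl ht), htq⟩
    · exact ⟨x, hter x (.inr ⟨hx, hxR⟩), List.mem_of_mem_head? hqx⟩
  · intro heq
    rw [← heq] at haA
    obtain ⟨P, ⟨t, ht, rfl⟩, hv⟩ := haA
    obtain ⟨-, -, b, -, h1, h2⟩ := hp t ht
    obtain rfl : b = a := Option.some.inj (h1.symm.trans hv)
    obtain rfl := rtg_eq_of_no_out ha (h2 b (List.mem_of_mem_head? h1)).2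
    exact hTR _ ht haR

theorem linkable_of_lk (h : Lk Γ Set.univ) : Γ.Linkable := by
  obtain ⟨F, h1, fn, inj, h4⟩ := h
  have hB : ∀ b ∈ Γ.B, ∀ x, ¬ F b x := fun b hb x e => Γ.not_from_B b x (h1 b x e).1 hb
  have hA : ∀ a ∈ Γ.A, ∀ x, ¬ F x a := fun a ha x e => Γ.not_into_A x a (h1 x a e).1 ha
  let T : Set V := {b | b ∈ Γ.B ∧ Cov Γ F b}
  have hT : ∀ t ∈ T, (∀ x, ¬ F t x) ∧ Cov Γ F t := fun t ht => ⟨hB t ht.1, ht.2⟩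
  obtain ⟨p, hp⟩ := exists_lists (fun u v e => (h1 u v e).1) fn hT
  refine ⟨{q | ∃ t ∈ T, q = p t}, ⟨⟨?_, ?_, ?_⟩, ?_⟩⟩
  · rintro q ⟨t, ht, rfl⟩
    obtain ⟨h1, h2, a, ha, h3, -⟩ := hp t ht
    exact ⟨h1, ⟨a, ha, h3⟩, t, ht.1, h2⟩
  · rintro q ⟨t, ht, rfl⟩ v hv hvAB
    obtain ⟨-, h2, a, ha, h3, h4⟩ := hp t ht
    rcases hvAB with hv' | hv'
    · left
      rw [h3, rtg_eq_of_no_in (hA v hv') (h4 v hv).1]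
    · right
      rw [h2, rtg_eq_of_no_out (hB v hv') (h4 v hv).2]
  · rintro q ⟨t, ht, rfl⟩ q' ⟨t', ht', rfl⟩ hne v hv hv'
    obtain ⟨-, -, b, -, -, h1⟩ := hp t ht
    obtain ⟨-, -, b', -, -, h1'⟩ := hp t' ht'
    exact hne (by rw [sink_unique fn (hT t ht).1 (hT t' ht').1 (h1 v hv).2 (h1' v hv').2])
  · ext a
    constructor
    · rintro ⟨q, ⟨t, ht, rfl⟩, hv⟩
      obtain ⟨-, -, b, hb, h1, -⟩ := hp t ht
      obtain rfl : b = a := Option.some.inj (h1.symm.trans hv)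
      exact hb
    · intro ha
      obtain ⟨b, hb, c⟩ := h4 a ha trivial
      have ht : b ∈ T := ⟨hb, a, ha, c⟩
      refine ⟨p b, ⟨b, ht, rfl⟩, ?_⟩
      obtain ⟨-, h2, a', ha', h3, h5⟩ := hp b ht
      rw [h3, source_unique inj (hA a ha) (hA a' ha') c
        (h5 b (List.mem_of_mem_getLast? h2)).1]

end Translation

end Core

/-- The Hall-type form of the Erdős–Menger theorem: every unhindered web is
linkable. -/
theorem unhindered_linkable (V : Type*) (Γ : Web V) (h : ¬ Γ.Hindered) :
    Γ.Linkable := by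
  exact Core.linkable_of_lk (Core.lk_univ fun h' => h (Core.hindered_of_hind h'))

end ErdosMenger
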